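/- Let 𝒞 = {𝓛₁, 𝓛₂} be a pseudo-fibered pair and g ∈ Aut(𝒞). If g has exactly two fixed points, then g is hyperbolic (one fixed point is attracting and the other is repelling), and each fixed point of g is a rainbow point of both 𝓛₁ and 𝓛₂. -/

import Mathlib

/-!
The argument treats the two lamination systems separately; the only thing one learns from the other
is that the complement of its endpoint set is dense in the circle (`LamSys.dense_E`).

*Gaps.* A polygon crossed by no leaf of `L` lies in a region bounded by a gap: take the maximal
elements of `L` inside each side (`LamSys.gapOf_isGap`, with `LamSys.exists_max` for maximality).
Applied to a bigon, quite fullness shows that two points off the endpoint set are separated by a leaf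
(`LamSys.exists_sep`), whence density. Applied to a triangle with a vertex `x` common to two leaves,
it produces a non-leaf gap between these leaves with `x` as a vertex. Looseness then forbids three
leaves with a common endpoint (`LamSys.fan`). As a consequence an automorphism permutes the leaves
bijectively (`LamSys.InAut.sym`), and a leaf ending at a fixed point `a` of `g` can only end
at the other fixed point `b`, since otherwise its images under `g` would form a fan (`leaf_fixed`).

*A separating leaf.* Some leaf separates `a` from `b` (`exists_sep_fixed`). If not, `{a, b}` is
itself a leaf. An arc strictly between `a` and `b` is never mapped into itself (`no_inv`), since this
would give another fixed point; hence the leaves on `(a, b)` around a given point cannot grow up to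
`(a, b)`, and some point `u` of `(a, b)` is covered by none of them (`exists_uncovered`). The bigon
with vertices `a` and `u` is then crossed by no leaf, and lies in a gap having `(b, a)` as a side; the
side following it would have to be `(a, b)`, which lies on no side of the bigon.

*Dynamics.* The image of a separating leaf `I` is unlinked with `I` and has different endpoints,
so it lies strictly on one side of `I` (`trap_or`). This makes one fixed point attracting and the
other one repelling (`attr_rep`), and the iterates of `I` shrink to the attracting point, because
the limit of their endpoints is a fixed point (`rainbow`). The inverse gives the rainbow at the other
point.
-/

open Set Filter Topology

namespace Veering

/-- The circle `S¹`: the unit additive circle `ℝ / ℤ`, with its standard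
circular order (`sbtw x y z` means the triple `(x,y,z)` is counterclockwise)
and its standard topology. -/
abbrev S1 : Type := UnitAddCircle

/-- A good open interval in `S¹`, recorded by its ordered pair of distinct
endpoints; its carrier is the set of points strictly counterclockwise
between them. -/
structure GoodInt : Type where
  a : S1
  b : S1
  ne : a ≠ b

namespace GoodInt

/-- The set of points of the good open interval `(a, b)`. -/
def carrier (I : GoodInt) : Set S1 := {z : S1 | sbtw I.a z I.b}

/-- The dual good interval `(u,v)* = (v,u)`. -/
def dual (I : GoodInt) : GoodInt := ⟨I.b, I.a, I.ne.symm⟩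

/-- The vertex set `v(ℓ(I)) = {a, b}` of the leaf determined by `I`. -/
def verts (I : GoodInt) : Set S1 := {I.a, I.b}

end GoodInt

/-- `I` and `J` represent the same leaf `ℓ(I) = {I, I*}`. -/
def SameLeaf (I J : GoodInt) : Prop := J = I ∨ J = I.dual

/-- A lamination system: a nonempty collection of good open intervals, closed
under duals, pairwise unlinked, and closed under unions of ascending chains
(when these unions are good intervals). -/
structure LamSys : Type where
  mem : Set GoodInt
  nonempty : mem.Nonempty
  dual_mem : ∀ I ∈ mem, GoodInt.dual I ∈ mem
  unlinked : ∀ I ∈ mem, ∀ J ∈ mem,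
      I.carrier ⊆ J.carrier ∨ I.dual.carrier ⊆ J.carrier ∨
      I.carrier ⊆ J.dual.carrier ∨ I.dual.carrier ⊆ J.dual.carrier
  chain_closed : ∀ c : ℕ → GoodInt, (∀ n, c n ∈ mem) →
      (∀ n, (c n).carrier ⊆ (c (n + 1)).carrier) →
      ∀ J : GoodInt, J.carrier = ⋃ n, (c n).carrier → J ∈ mem

namespace LamSys

/-- The endpoint set `E(𝓛)`: the union of the vertex sets of all leaves. -/
def E (L : LamSys) : Set S1 := ⋃ I ∈ L.mem, I.verts

/-- A gap of `L`: a set of pairwise disjoint elements of `L` such that every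
leaf of `L` lies on one of them. -/
def IsGap (L : LamSys) (G : Set GoodInt) : Prop :=
  G ⊆ L.mem ∧
  (∀ I ∈ G, ∀ J ∈ G, I ≠ J → Disjoint I.carrier J.carrier) ∧
  (∀ I ∈ L.mem, ∃ J ∈ G, I.carrier ⊆ J.carrier ∨ I.dual.carrier ⊆ J.carrier)

end LamSys

/-- The vertex set `v(𝒢) = S¹ \ ⋃ 𝒢` of a gap. -/
def gapVerts (G : Set GoodInt) : Set S1 := (⋃ I ∈ G, I.carrier)ᶜ

/-- `t` is a tip of `G`: an isolated point of the vertex set of `G`. -/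
def IsTipOf (t : S1) (G : Set GoodInt) : Prop :=
  t ∈ gapVerts G ∧ t ∉ closure (gapVerts G \ {t})

/-- A gap that is itself a leaf `{I, I*}`. -/
def IsLeafGap (G : Set GoodInt) : Prop := ∃ I : GoodInt, G = {I, I.dual}

/-- `G` is a crown with tip sequence `t : ℤ → S¹` and pivot `p`. -/
def IsCrownWith (G : Set GoodInt) (t : ℤ → S1) (p : S1) : Prop :=
  (∀ k, p ≠ t k) ∧ (∀ k, t k ≠ t (k + 1)) ∧
  G = {I : GoodInt | ∃ k : ℤ, I.a = t k ∧ I.b = t (k + 1)} ∧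
  gapVerts G = Set.range t ∪ {p}

/-- `G` is a crown. -/
def IsCrown (G : Set GoodInt) : Prop := ∃ t p, IsCrownWith G t p

/-- `p` is the pivot of the crown `G`. -/
def IsPivotOf (p : S1) (G : Set GoodInt) : Prop := ∃ t, IsCrownWith G t p

/-- A lamination system is quite full if every gap is an ideal polygon
(finitely many vertices) or a crown. -/
def LamSys.QuiteFull (L : LamSys) : Prop :=
  ∀ G : Set GoodInt, L.IsGap G → (gapVerts G).Finite ∨ IsCrown G

/-- `p` is a rainbow point of `L`: there is a strictly descending sequence of
elements of `L` whose intersection is `{p}`. -/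
def LamSys.IsRainbowPt (L : LamSys) (p : S1) : Prop :=
  ∃ I : ℕ → GoodInt, (∀ n, I n ∈ L.mem) ∧
    (∀ n, (I (n + 1)).carrier ⊂ (I n).carrier) ∧ (⋂ n, (I n).carrier) = {p}

/-- `L` is loose: distinct non-leaf gaps have disjoint vertex sets. -/
def LamSys.Loose (L : LamSys) : Prop :=
  ∀ G H : Set GoodInt, L.IsGap G → L.IsGap H → ¬ IsLeafGap G → ¬ IsLeafGap H →
    G ≠ H → Disjoint (gapVerts G) (gapVerts H)

/-- The sequence of leaves represented by `c` converges to the good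
interval `J`. -/
def SeqConv (c : ℕ → GoodInt) (J : GoodInt) : Prop :=
  ∃ d : ℕ → GoodInt, (∀ n, SameLeaf (c n) (d n)) ∧
    J.carrier ⊆ Filter.liminf (fun n => (d n).carrier) Filter.atTop ∧
    Filter.limsup (fun n => (d n).carrier) Filter.atTop ⊆ closure J.carrier

/-- `I ∈ L` admits an `I`-side sequence: a sequence of leaves of `L`, each
distinct from `ℓ(I)` and lying on `I`, converging to `I`.  (`I` is isolated
precisely when this fails.) -/
def LamSys.HasSideSeq (L : LamSys) (I : GoodInt) : Prop :=
  ∃ c : ℕ → GoodInt, (∀ n, c n ∈ L.mem) ∧ (∀ n, ¬ SameLeaf I (c n)) ∧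
    (∀ n, (c n).carrier ⊆ I.carrier ∨ (c n).dual.carrier ⊆ I.carrier) ∧
    SeqConv c I

/-- `L` is totally disconnected: every distinct pair is separated by a
non-leaf gap. -/
def LamSys.TotDisc (L : LamSys) : Prop :=
  ∀ I ∈ L.mem, ∀ J ∈ L.mem, I.carrier ⊂ J.dual.carrier →
    ∃ G : Set GoodInt, L.IsGap G ∧ ¬ IsLeafGap G ∧
      ∃ M ∈ G, ∃ N ∈ G, I.carrier ⊆ M.carrier ∧ J.carrier ⊆ N.carrier

/-- Gaps `G1` and `G2` interleave: every element of each contains exactly one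
vertex of the other. -/
def Interleave (G1 G2 : Set GoodInt) : Prop :=
  (∀ I ∈ G1, ∃! x : S1, x ∈ I.carrier ∩ gapVerts G2) ∧
  (∀ I ∈ G2, ∃! x : S1, x ∈ I.carrier ∩ gapVerts G1)

/-- A pseudo-fibered pair: two quite full, loose, strongly transverse
lamination systems. -/
structure PseudoFibered (L1 L2 : LamSys) : Prop where
  qf1 : L1.QuiteFull
  qf2 : L2.QuiteFull
  loose1 : L1.Loose
  loose2 : L2.Loose
  transverse : L1.E ∩ L2.E = ∅

/-- A veering pair: a pseudo-fibered pair in which every non-leaf gap of one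
system admits an interleaving gap in the other. -/
structure VeeringPair (L1 L2 : LamSys) extends PseudoFibered L1 L2 : Prop where
  inter1 : ∀ G : Set GoodInt, L1.IsGap G → ¬ IsLeafGap G →
    ∃ H : Set GoodInt, L2.IsGap H ∧ Interleave G H
  inter2 : ∀ G : Set GoodInt, L2.IsGap G → ¬ IsLeafGap G →
    ∃ H : Set GoodInt, L1.IsGap H ∧ Interleave G H

/-- An orientation-preserving homeomorphism of the circle: a bijection of
`S¹` which together with its inverse is continuous, and which preserves the
counterclockwise circular order. -/
def PosHomeo (g : Equiv.Perm S1) : Prop :=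
  Continuous ⇑g ∧ Continuous ⇑g.symm ∧
  ∀ x y z : S1, sbtw x y z → sbtw (g x) (g y) (g z)

/-- `g ∈ Aut(𝓛)`: an orientation-preserving homeomorphism of `S¹` mapping each
element of `𝓛` to an element of `𝓛`. -/
def LamSys.InAut (L : LamSys) (g : Equiv.Perm S1) : Prop :=
  PosHomeo g ∧ ∀ I ∈ L.mem, ∃ J ∈ L.mem, J.carrier = ⇑g '' I.carrier

/-- `g` maps the gap `G` onto itself. -/
def MapsGapOnto (g : Equiv.Perm S1) (G : Set GoodInt) : Prop :=
  (∀ I ∈ G, ∃ J ∈ G, J.carrier = ⇑g '' I.carrier) ∧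
  (∀ J ∈ G, ∃ I ∈ G, J.carrier = ⇑g '' I.carrier)

/-- The fixed point set of `g` on `S¹`. -/
def FixSet (g : Equiv.Perm S1) : Set S1 := {x : S1 | g x = x}

/-- The set of periodic points of `g` on `S¹`. -/
def PerSet (g : Equiv.Perm S1) : Set S1 := {x : S1 | ∃ n : ℕ, 0 < n ∧ (g ^ n) x = x}

/-- `p` is an attracting fixed point of `g`. -/
def IsAttractingFix (g : Equiv.Perm S1) (p : S1) : Prop :=
  g p = p ∧ ∃ I : GoodInt, I.carrier ∩ FixSet g = {p} ∧
    ⇑g '' closure I.carrier ⊆ I.carrier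

/-- `p` is a repelling fixed point of `g`. -/
def IsRepellingFix (g : Equiv.Perm S1) (p : S1) : Prop :=
  g p = p ∧ ∃ I : GoodInt, I.carrier ∩ FixSet g = {p} ∧
    I.carrier ⊆ ⇑g '' closure I.carrier

/-- `g` is elliptic: nontrivial of finite order. -/
def Elliptic (g : Equiv.Perm S1) : Prop := g ≠ 1 ∧ IsOfFinOrder g

/-- `g` is parabolic: it has exactly one fixed point. -/
def Parabolic (g : Equiv.Perm S1) : Prop := ∃! x : S1, g x = x

/-- `g` is hyperbolic: exactly two fixed points, one attracting and one
repelling. -/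
def Hyperbolic (g : Equiv.Perm S1) : Prop :=
  ∃ a b : S1, a ≠ b ∧ FixSet g = {a, b} ∧ IsAttractingFix g a ∧ IsRepellingFix g b

/-- `g` is pseudo-Anosov-like for the pair `(L1, L2)`: nontrivial, neither
elliptic nor parabolic, and preserving both gaps of some interleaving pair. -/
def PAlike (L1 L2 : LamSys) (g : Equiv.Perm S1) : Prop :=
  g ≠ 1 ∧ ¬ Elliptic g ∧ ¬ Parabolic g ∧
  ∃ G1 G2 : Set GoodInt, L1.IsGap G1 ∧ L2.IsGap G2 ∧ Interleave G1 G2 ∧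
    MapsGapOnto g G1 ∧ MapsGapOnto g G2

/-- `g` is properly pseudo-Anosov: pA-like with nonempty fixed point set. -/
def ProperlyPA (L1 L2 : LamSys) (g : Equiv.Perm S1) : Prop :=
  PAlike L1 L2 g ∧ (FixSet g).Nonempty

/-- Two leaves are linked: each of the two complementary components of the
vertex set of one contains a vertex of the other. -/
def LeavesLinked (I J : GoodInt) : Prop :=
  (I.carrier ∩ J.verts).Nonempty ∧ (I.dual.carrier ∩ J.verts).Nonempty

/-- Two gaps are linked: they contain a linked pair of boundary leaves. -/
def GapsLinked (G1 G2 : Set GoodInt) : Prop :=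
  ∃ I1 ∈ G1, ∃ I2 ∈ G2, LeavesLinked I1 I2

/-- Gaps `G1`, `G2` cross: there are distinct pairs `{I₁, J₁} ⊆ G1`,
`{I₂, J₂} ⊆ G2` such that for each `i`, the vertex set of the other gap is
contained in `Iᵢ ∪ Jᵢ` and meets `Iᵢ` in exactly one point. -/
def GapsCross (G1 G2 : Set GoodInt) : Prop :=
  ∃ I1 ∈ G1, ∃ J1 ∈ G1, ∃ I2 ∈ G2, ∃ J2 ∈ G2,
    I1.carrier ⊂ J1.dual.carrier ∧ I2.carrier ⊂ J2.dual.carrier ∧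
    gapVerts G2 ⊆ I1.carrier ∪ J1.carrier ∧
    (∃! x : S1, x ∈ I1.carrier ∩ gapVerts G2) ∧
    gapVerts G1 ⊆ I2.carrier ∪ J2.carrier ∧
    (∃! x : S1, x ∈ I2.carrier ∩ gapVerts G1)

/-- The Baumslag–Solitar group `BS(m,n) = ⟨a, b | b aᵐ b⁻¹ = aⁿ⟩`,
with `a = FreeGroup.of false` and `b = FreeGroup.of true`. -/
abbrev BSGroup (m n : ℤ) : Type :=
  PresentedGroup
    ({FreeGroup.of true * FreeGroup.of false ^ m * (FreeGroup.of true)⁻¹ *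
        (FreeGroup.of false ^ n)⁻¹} : Set (FreeGroup Bool))

/-! ### Coordinates on the circle -/

/-- The coordinate of `x` in `[0, 1)` obtained by cutting the circle open at `q`. -/
noncomputable def crd (q x : S1) : ℝ := (AddCircle.equivIco 1 0 (x - q) : ℝ)

theorem crd_nonneg (q x : S1) : 0 ≤ crd q x := (AddCircle.equivIco 1 0 (x - q)).2.1

theorem crd_lt_one (q x : S1) : crd q x < 1 := by
  have := (AddCircle.equivIco 1 0 (x - q)).2.2
  simpa [crd] using this

theorem crd_coe (q x : S1) : ((crd q x : ℝ) : S1) = x - q := by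
  have := (AddCircle.equivIco (1 : ℝ) 0).symm_apply_apply (x - q)
  exact this

theorem crd_inj {q x y : S1} (h : crd q x = crd q y) : x = y := by
  have h1 := crd_coe q x
  rw [h, crd_coe q y] at h1
  exact (sub_left_injective h1).symm

theorem crd_of (q : S1) {t : ℝ} (h0 : 0 ≤ t) (h1 : t < 1) : crd q (q + (t : S1)) = t := by
  unfold crd
  rw [add_sub_cancel_left]
  have := AddCircle.coe_equivIco_mk_apply (p := (1 : ℝ)) t
  rw [this]
  simp [Int.fract_eq_self.2 ⟨h0, h1⟩]

theorem crd_surj (q : S1) {t : ℝ} (h0 : 0 ≤ t) (h1 : t < 1) : ∃ x, crd q x = t :=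
  ⟨_, crd_of q h0 h1⟩

theorem crd_self (q : S1) : crd q q = 0 := by
  have := crd_of q (t := 0) le_rfl one_pos
  simpa using this

theorem crd_pos {q x : S1} (h : x ≠ q) : 0 < crd q x := by
  rcases (crd_nonneg q x).lt_or_eq with h' | h'
  · exact h'
  · exact absurd (crd_inj (h'.symm.trans (crd_self q).symm)) h

theorem eq_add_crd (q x : S1) : x = ((crd q x : ℝ) : S1) + q := by
  rw [crd_coe]; abel

theorem btw_iff_crd (q x y z : S1) : btw x y z ↔
    ((crd q x ≤ crd q y ∧ crd q y ≤ crd q z) ∨ (crd q y ≤ crd q z ∧ crd q z ≤ crd q x) ∨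
      (crd q z ≤ crd q x ∧ crd q x ≤ crd q y)) := by
  have hxyz : btw x y z ↔ toIcoMod (one_pos (α := ℝ)) 0 (crd q y - crd q x) ≤
      toIocMod (one_pos (α := ℝ)) 0 (crd q z - crd q x) := by
    have h1 : y - x = (((crd q y - crd q x : ℝ)) : S1) := by
      rw [AddCircle.coe_sub, crd_coe, crd_coe]; abel
    have h2 : z - x = (((crd q z - crd q x : ℝ)) : S1) := by
      rw [AddCircle.coe_sub, crd_coe, crd_coe]; abel
    change (_ ≤ _) ↔ _
    rw [h1, h2]
    rfl
  rw [hxyz]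
  have hy : toIcoMod (one_pos (α := ℝ)) 0 (crd q y - crd q x) =
      if crd q x ≤ crd q y then crd q y - crd q x else crd q y - crd q x + 1 := by
    have := crd_nonneg q x; have := crd_nonneg q y
    have := crd_lt_one q x; have := crd_lt_one q y
    rw [toIcoMod_eq_iff]
    split_ifs
    · exact ⟨⟨by linarith, by linarith⟩, 0, by simp⟩
    · exact ⟨⟨by linarith, by linarith⟩, -1, by simp⟩
  have hz : toIocMod (one_pos (α := ℝ)) 0 (crd q z - crd q x) =
      if crd q x < crd q z then crd q z - crd q x else crd q z - crd q x + 1 := by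
    have := crd_nonneg q x; have := crd_nonneg q z
    have := crd_lt_one q x; have := crd_lt_one q z
    rw [toIocMod_eq_iff]
    split_ifs
    · exact ⟨⟨by linarith, by linarith⟩, 0, by simp⟩
    · exact ⟨⟨by linarith, by linarith⟩, -1, by simp⟩
  rw [hy, hz]
  have := crd_nonneg q x; have := crd_nonneg q z; have := crd_nonneg q y
  have := crd_lt_one q x; have := crd_lt_one q z; have := crd_lt_one q y
  split_ifs <;> grind

/-- In any coordinate, the circular order is the cyclic closure of the order of `[0, 1)`. -/
theorem sbtw_iff (q x y z : S1) : sbtw x y z ↔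
    ((crd q x < crd q y ∧ crd q y < crd q z) ∨ (crd q y < crd q z ∧ crd q z < crd q x) ∨
      (crd q z < crd q x ∧ crd q x < crd q y)) := by
  rw [sbtw_iff_not_btw, btw_iff_crd q]
  grind

theorem sbtw_ne {x y z : S1} (h : sbtw x y z) : x ≠ y ∧ y ≠ z ∧ x ≠ z := by
  rw [sbtw_iff x] at h
  refine ⟨?_, ?_, ?_⟩ <;> rintro rfl <;> grind

theorem sbtw_base {q x y : S1} : sbtw q x y ↔ 0 < crd q x ∧ crd q x < crd q y := by
  rw [sbtw_iff q, crd_self]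
  have := crd_nonneg q x; have := crd_nonneg q y
  grind

theorem exists_sbtw {u v : S1} (h : u ≠ v) : ∃ z, sbtw u z v := by
  have h1 := crd_pos h.symm
  have h2 := crd_lt_one u v
  obtain ⟨z, hz⟩ := crd_surj u (t := crd u v / 2) (by linarith) (by linarith)
  exact ⟨z, sbtw_base.2 (by rw [hz]; constructor <;> linarith)⟩

@[simp] theorem mem_carrier {I : GoodInt} {z : S1} : z ∈ I.carrier ↔ sbtw I.a z I.b := Iff.rfl
@[simp] theorem dual_a (I : GoodInt) : I.dual.a = I.b := rfl
@[simp] theorem dual_b (I : GoodInt) : I.dual.b = I.a := rfl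
@[simp] theorem dual_dual (I : GoodInt) : I.dual.dual = I := rfl

theorem GoodInt.ext' {I J : GoodInt} (h1 : I.a = J.a) (h2 : I.b = J.b) : I = J := by
  cases I; cases J; simp_all

theorem sub_left {J K : GoodInt} (h : J.carrier ⊆ K.carrier) : J.a = K.a ∨ sbtw K.a J.a K.b := by
  by_contra hc
  push Not at hc
  obtain ⟨h1, h2⟩ := hc
  have hb := crd_pos J.ne.symm
  have hk := crd_pos (Ne.symm h1)
  have hK : crd J.a K.a ≠ crd J.a K.b := fun e => K.ne (crd_inj e)
  have := crd_lt_one J.a J.b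
  obtain ⟨z, hz⟩ := crd_surj J.a (t := min (crd J.a J.b) (crd J.a K.a) / 2)
    (by positivity) (by linarith [min_le_left (crd J.a J.b) (crd J.a K.a)])
  have hm1 := min_le_left (crd J.a J.b) (crd J.a K.a)
  have hm2 := min_le_right (crd J.a J.b) (crd J.a K.a)
  have hm3 : 0 < min (crd J.a J.b) (crd J.a K.a) := lt_min hb hk
  have hz1 : z ∈ J.carrier := sbtw_base.2 ⟨by linarith, by linarith⟩
  have hz2 := h hz1
  rw [mem_carrier, sbtw_iff J.a] at hz2
  rw [sbtw_iff J.a, crd_self] at h2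
  have := crd_nonneg J.a K.b
  grind

theorem sub_right {J K : GoodInt} (h : J.carrier ⊆ K.carrier) : J.b = K.b ∨ sbtw K.a J.b K.b := by
  by_contra hc
  push Not at hc
  obtain ⟨h1, h2⟩ := hc
  have hb := crd_pos J.ne
  have hk := crd_pos (Ne.symm h1)
  have hK : crd J.b K.a ≠ crd J.b K.b := fun e => K.ne (crd_inj e)
  have := crd_lt_one J.b J.a
  have := crd_lt_one J.b K.b
  obtain ⟨z, hz⟩ := crd_surj J.b (t := (1 + max (crd J.b J.a) (crd J.b K.b)) / 2)
    (by positivity) (by linarith [max_lt ‹crd J.b J.a < 1› ‹crd J.b K.b < 1›])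
  have hm1 := le_max_left (crd J.b J.a) (crd J.b K.b)
  have hm2 := le_max_right (crd J.b J.a) (crd J.b K.b)
  have hm3 := max_lt ‹crd J.b J.a < 1› ‹crd J.b K.b < 1›
  have hz1 : z ∈ J.carrier := by
    rw [mem_carrier, sbtw_iff J.b, crd_self]
    right; right
    exact ⟨crd_pos J.ne, by linarith⟩
  have hz2 := h hz1
  rw [mem_carrier, sbtw_iff J.b] at hz2
  rw [sbtw_iff J.b, crd_self] at h2
  have := crd_nonneg J.b K.a
  grind

/-! ### Good intervals and maximal elements -/

theorem crd_ne {q x y : S1} (h : x ≠ y) : crd q x ≠ crd q y := fun e => h (crd_inj e)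

theorem carrier_inj {I J : GoodInt} (h : I.carrier = J.carrier) : I = J := by
  refine GoodInt.ext' ?_ ?_
  · rcases sub_left h.subset with h1 | h1
    · exact h1
    · rw [← mem_carrier, ← h, mem_carrier] at h1
      exact absurd rfl (sbtw_ne h1).1
  · rcases sub_right h.subset with h1 | h1
    · exact h1
    · rw [← mem_carrier, ← h, mem_carrier] at h1
      exact absurd rfl (sbtw_ne h1).2.1

theorem not_mem_left (I : GoodInt) : I.a ∉ I.carrier := fun h => (sbtw_ne h).1 rfl
theorem not_mem_right (I : GoodInt) : I.b ∉ I.carrier := fun h => (sbtw_ne h).2.1 rfl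

theorem carrier_nonempty (I : GoodInt) : I.carrier.Nonempty := exists_sbtw I.ne

theorem not_mem_dual {I : GoodInt} {z : S1} (h : z ∈ I.carrier) : z ∉ I.dual.carrier := by
  simp only [mem_carrier, dual_a, dual_b] at *
  exact sbtw_asymm h

theorem crd_of_sub {J P : GoodInt} (h : J.carrier ⊆ P.carrier) :
    crd P.a J.a < crd P.a J.b ∧ crd P.a J.b ≤ crd P.a P.b := by
  have h1 := sub_left h
  have h2 := sub_right h
  have h3 := crd_ne (q := P.a) J.ne
  have h4 : P.b ∉ J.carrier := fun h' => not_mem_right P (h h')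
  have h5 : P.a ∉ J.carrier := fun h' => not_mem_left P (h h')
  rw [mem_carrier, sbtw_iff P.a] at h4 h5
  rw [crd_self] at h5
  rw [sbtw_base] at h1 h2
  have h6 := crd_self P.a
  have := crd_nonneg P.a J.a
  have := crd_pos P.ne.symm
  have h7 : J.a = P.a → crd P.a J.a = 0 := by rintro e; rw [e, h6]
  have h8 : J.b = P.b → crd P.a J.b = crd P.a P.b := by rintro e; rw [e]
  grind

theorem mem_of_sub {J P : GoodInt} (h : J.carrier ⊆ P.carrier) {z : S1} :
    z ∈ J.carrier ↔ crd P.a J.a < crd P.a z ∧ crd P.a z < crd P.a J.b := by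
  have := crd_of_sub h
  rw [mem_carrier, sbtw_iff P.a]
  grind

theorem sub_of_crd {J P : GoodInt} (h : crd P.a J.a < crd P.a J.b)
    (h' : crd P.a J.b ≤ crd P.a P.b) : J.carrier ⊆ P.carrier := by
  intro z hz
  rw [mem_carrier, sbtw_iff P.a] at hz
  rw [mem_carrier, sbtw_base]
  have := crd_nonneg P.a J.a
  grind

theorem sub_of_sub {J K P : GoodInt} (hJ : J.carrier ⊆ P.carrier) (hK : K.carrier ⊆ P.carrier)
    (h1 : crd P.a K.a ≤ crd P.a J.a) (h2 : crd P.a J.b ≤ crd P.a K.b) :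
    J.carrier ⊆ K.carrier := by
  intro z hz
  rw [mem_of_sub hJ] at hz
  rw [mem_of_sub hK]
  grind

theorem le_of_sub {J K P : GoodInt} (hJK : J.carrier ⊆ K.carrier) (hK : K.carrier ⊆ P.carrier) :
    crd P.a K.a ≤ crd P.a J.a ∧ crd P.a J.b ≤ crd P.a K.b := by
  have h1 := sub_left hJK
  have h2 := sub_right hJK
  rw [← mem_carrier, mem_of_sub hK] at h1 h2
  have h7 : J.a = K.a → crd P.a J.a = crd P.a K.a := by rintro e; rw [e]
  have h8 : J.b = K.b → crd P.a J.b = crd P.a K.b := by rintro e; rw [e]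
  grind

theorem dual_sub {J P : GoodInt} (h : J.carrier ⊆ P.carrier) :
    P.dual.carrier ⊆ J.dual.carrier := by
  have := crd_of_sub h
  intro z hz
  rw [mem_carrier, dual_a, dual_b, sbtw_iff P.a, crd_self] at hz
  rw [mem_carrier, dual_a, dual_b, sbtw_iff P.a]
  have := crd_nonneg P.a J.a
  have := crd_nonneg P.a z
  grind

theorem sub_dual_of_disjoint {I J : GoodInt} (h : Disjoint I.carrier J.carrier) :
    I.carrier ⊆ J.dual.carrier := by
  intro z hz
  by_contra hc
  have hzJ : z ∉ J.carrier := fun h' => Set.disjoint_left.1 h hz h'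
  rw [mem_carrier, dual_a, dual_b] at hc
  rw [mem_carrier] at hzJ
  have hne := J.ne
  rw [mem_carrier] at hz
  have h3 := sbtw_ne hz
  have hJ := crd_pos J.ne
  rcases eq_or_ne z J.a with rfl | e1
  · obtain ⟨w, hw⟩ := crd_surj J.a (t := min (crd J.a I.b) (crd J.a J.b) / 2)
      (by have := crd_nonneg J.a I.b; have := crd_nonneg J.a J.b; positivity)
      (by linarith [min_le_left (crd J.a I.b) (crd J.a J.b), crd_lt_one J.a I.b,
        crd_nonneg J.a I.b])
    have hp1 := crd_pos h3.2.1.symm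
    have hp2 := crd_pos J.ne.symm
    have hm1 := min_le_left (crd J.a I.b) (crd J.a J.b)
    have hm2 := min_le_right (crd J.a I.b) (crd J.a J.b)
    have hm3 := lt_min hp1 hp2
    refine Set.disjoint_left.1 h (?_ : w ∈ I.carrier) ?_
    · rw [mem_carrier, sbtw_iff J.a]
      rw [sbtw_iff J.a, crd_self] at hz
      have := crd_nonneg J.a I.a
      grind
    · rw [mem_carrier, sbtw_base]
      grind
  · rcases eq_or_ne z J.b with rfl | e2
    · have hp1 := crd_pos h3.1
      have hp2 := crd_pos J.ne
      have hm1 := le_max_left (crd J.b I.a) (crd J.b J.a)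
      have hm2 := le_max_right (crd J.b I.a) (crd J.b J.a)
      have hm3 := max_lt (crd_lt_one J.b I.a) (crd_lt_one J.b J.a)
      obtain ⟨w, hw⟩ := crd_surj J.b (t := (1 + max (crd J.b I.a) (crd J.b J.a)) / 2)
        (by linarith) (by linarith)
      refine Set.disjoint_left.1 h (?_ : w ∈ I.carrier) ?_
      · rw [mem_carrier, sbtw_iff J.b]
        rw [sbtw_iff J.b, crd_self] at hz
        have := crd_nonneg J.b I.b
        grind
      · rw [mem_carrier, sbtw_iff J.b, crd_self]
        grind
    · have := crd_ne (q := J.a) e1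
      have := crd_ne (q := J.a) e2
      have := crd_ne (q := J.a) hne
      rw [sbtw_iff J.a] at hc hzJ
      grind

namespace LamSys

variable (L : LamSys)

/-- No leaf of `L` crosses another one. -/
theorem unl {L : LamSys} {I J : GoodInt} (hI : I ∈ L.mem) (hJ : J ∈ L.mem)
    (h1 : J.a ∈ I.carrier) (h2 : J.b ∈ I.dual.carrier) : False := by
  rcases L.unlinked I hI J hJ with h | h | h | h
  · exact not_mem_left J (h h1)
  · exact not_mem_right J (h h2)
  · exact not_mem_right J.dual (h h1)
  · exact not_mem_left J.dual (h h2)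

/-- Elements of `L` with a common point, inside a good interval `P`, are nested. -/
theorem nested {L : LamSys} {I J P : GoodInt} (hI : I ∈ L.mem) (hJ : J ∈ L.mem)
    (hIP : I.carrier ⊆ P.carrier) (hJP : J.carrier ⊆ P.carrier) {z : S1}
    (hz : z ∈ I.carrier) (hz' : z ∈ J.carrier) :
    I.carrier ⊆ J.carrier ∨ J.carrier ⊆ I.carrier := by
  rcases L.unlinked I hI J hJ with h | h | h | h
  · exact Or.inl h
  · obtain ⟨w, hw⟩ := carrier_nonempty P.dual
    exact absurd hw (not_mem_dual (hJP (h (dual_sub hIP hw))))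
  · exact absurd (h hz) (not_mem_dual hz')
  · exact Or.inr (by simpa using dual_sub h)

/-- A good interval exhausted from inside by elements of `L` belongs to `L`. -/
theorem mem_of_exhaust {L : LamSys} {A : GoodInt}
    (h : ∀ x ∈ A.carrier, ∀ y ∈ A.carrier, ∃ K ∈ L.mem, x ∈ K.carrier ∧ y ∈ K.carrier ∧
      K.carrier ⊆ A.carrier) : A ∈ L.mem := by
  classical
  have hd := crd_pos A.ne.symm
  have hd1 := crd_lt_one A.a A.b
  set d := crd A.a A.b with hdd
  have hfrac : ∀ n : ℕ, 0 < d / (n + 2) ∧ d / (n + 2) ≤ d / 2 := fun n => by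
    refine ⟨by positivity, ?_⟩
    apply div_le_div_of_nonneg_left hd.le two_pos
    have : (0 : ℝ) ≤ n := Nat.cast_nonneg n
    linarith
  choose x hx using fun n : ℕ => crd_surj A.a (t := d / (n + 2)) (hfrac n).1.le
    (by linarith [(hfrac n).2])
  choose y hy using fun n : ℕ => crd_surj A.a (t := d - d / (n + 2))
    (by linarith [(hfrac n).2]) (by linarith [(hfrac n).1])
  obtain ⟨z, hz⟩ := crd_surj A.a (t := d / 2) (by linarith) (by linarith)
  have hxA : ∀ n, x n ∈ A.carrier := fun n => by
    rw [mem_carrier, sbtw_base, hx]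
    exact ⟨(hfrac n).1, by linarith [(hfrac n).2]⟩
  have hyA : ∀ n, y n ∈ A.carrier := fun n => by
    rw [mem_carrier, sbtw_base, hy]
    exact ⟨by linarith [(hfrac n).2], by linarith [(hfrac n).1]⟩
  choose K hKL hxK hyK hKA using fun n => h (x n) (hxA n) (y n) (hyA n)
  have hzK : ∀ n, z ∈ (K n).carrier := fun n => by
    have h1 := (mem_of_sub (hKA n)).1 (hxK n)
    have h2 := (mem_of_sub (hKA n)).1 (hyK n)
    rw [mem_of_sub (hKA n), hz]
    rw [hx] at h1
    rw [hy] at h2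
    have := (hfrac n).2
    constructor <;> linarith
  -- running maximum of the `K n`, which are pairwise nested as they share `z` inside `A`
  let c : ℕ → GoodInt := fun n => Nat.rec (K 0)
    (fun n c => if c.carrier ⊆ (K (n + 1)).carrier then K (n + 1) else c) n
  have hcs : ∀ n, c (n + 1) = if (c n).carrier ⊆ (K (n + 1)).carrier then K (n + 1) else c n :=
    fun n => rfl
  have hc : ∀ n, c n ∈ L.mem ∧ (c n).carrier ⊆ A.carrier ∧ (K n).carrier ⊆ (c n).carrier := by
    intro n
    induction n with
    | zero => exact ⟨hKL 0, hKA 0, subset_rfl⟩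
    | succ n ih =>
      rw [hcs]
      split_ifs with hif
      · exact ⟨hKL _, hKA _, subset_rfl⟩
      · refine ⟨ih.1, ih.2.1, ?_⟩
        exact (nested ih.1 (hKL (n + 1)) ih.2.1 (hKA _) (ih.2.2 (hzK n)) (hzK _)).resolve_left hif
  refine L.chain_closed c (fun n => (hc n).1) (fun n => ?_) A ?_
  · rw [hcs]
    split_ifs with hif
    · exact hif
    · exact subset_rfl
  · apply subset_antisymm
    · intro w hw
      have hw' := hw
      rw [mem_carrier, sbtw_base] at hw'
      obtain ⟨n, hn⟩ := exists_nat_gt (d / min (crd A.a w) (d - crd A.a w))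
      have hmp : 0 < min (crd A.a w) (d - crd A.a w) := lt_min hw'.1 (by linarith [hw'.2])
      have hlt : d / (n + 2) < min (crd A.a w) (d - crd A.a w) := by
        rw [div_lt_iff₀ hmp] at hn
        rw [div_lt_iff₀ (by positivity)]
        nlinarith
      rw [Set.mem_iUnion]
      refine ⟨n, (hc n).2.2 ?_⟩
      have h1 := (mem_of_sub (hKA n)).1 (hxK n)
      have h2 := (mem_of_sub (hKA n)).1 (hyK n)
      rw [mem_of_sub (hKA n)]
      rw [hx] at h1
      rw [hy] at h2
      have := lt_min_iff.1 hlt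
      constructor <;> linarith
    · exact Set.iUnion_subset fun n => (hc n).2.1

/-- Every element of `L` inside a good interval `P` is contained in a maximal such element. -/
theorem exists_max {L : LamSys} {J P : GoodInt} (hJ : J ∈ L.mem) (hJP : J.carrier ⊆ P.carrier) :
    ∃ K ∈ L.mem, J.carrier ⊆ K.carrier ∧ K.carrier ⊆ P.carrier ∧
      ∀ M ∈ L.mem, K.carrier ⊆ M.carrier → M.carrier ⊆ P.carrier → M = K := by
  let S : Set GoodInt := {K | K ∈ L.mem ∧ J.carrier ⊆ K.carrier ∧ K.carrier ⊆ P.carrier}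
  have hJS : J ∈ S := ⟨hJ, subset_rfl, hJP⟩
  let SA := (fun K : GoodInt => crd P.a K.a) '' S
  let SB := (fun K : GoodInt => crd P.a K.b) '' S
  have hSA : BddBelow SA := ⟨0, by rintro _ ⟨K, -, rfl⟩; exact crd_nonneg _ _⟩
  have hSB : BddAbove SB := ⟨crd P.a P.b, by
    rintro _ ⟨K, hK, rfl⟩; exact (crd_of_sub hK.2.2).2⟩
  have hSAn : SA.Nonempty := ⟨_, J, hJS, rfl⟩
  have hSBn : SB.Nonempty := ⟨_, J, hJS, rfl⟩
  have hle1 : ∀ K ∈ S, sInf SA ≤ crd P.a K.a := fun K hK => csInf_le hSA ⟨K, hK, rfl⟩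
  have hle2 : ∀ K ∈ S, crd P.a K.b ≤ sSup SB := fun K hK => le_csSup hSB ⟨K, hK, rfl⟩
  have h0 : 0 ≤ sInf SA := le_csInf hSAn (by rintro _ ⟨K, -, rfl⟩; exact crd_nonneg _ _)
  have h1 : sSup SB ≤ crd P.a P.b := csSup_le hSBn (by
    rintro _ ⟨K, hK, rfl⟩; exact (crd_of_sub hK.2.2).2)
  have hlt : sInf SA < sSup SB := by
    have := hle1 J hJS; have := hle2 J hJS; have := (crd_of_sub hJP).1; linarith
  have hP1 := crd_lt_one P.a P.b
  obtain ⟨x, hx⟩ := crd_surj P.a h0 (by linarith)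
  obtain ⟨y, hy⟩ := crd_surj P.a (t := sSup SB) (by linarith) (by linarith)
  have hxy : x ≠ y := by rintro rfl; linarith
  let A : GoodInt := ⟨x, y, hxy⟩
  have hAP : A.carrier ⊆ P.carrier := sub_of_crd (by change crd P.a x < crd P.a y; linarith)
    (by change crd P.a y ≤ _; linarith)
  have hSsub : ∀ K ∈ S, K.carrier ⊆ A.carrier := fun K hK =>
    sub_of_sub hK.2.2 hAP (by change crd P.a x ≤ _; rw [hx]; exact hle1 K hK)
      (by change _ ≤ crd P.a y; rw [hy]; exact hle2 K hK)
  obtain ⟨z, hz⟩ := carrier_nonempty J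
  have hA : A ∈ L.mem := by
    apply mem_of_exhaust
    intro u hu v hv
    rw [mem_of_sub hAP] at hu hv
    change crd P.a x < _ ∧ _ < crd P.a y at hu
    change crd P.a x < _ ∧ _ < crd P.a y at hv
    rw [hx, hy] at hu hv
    obtain ⟨_, ⟨K1, hK1, rfl⟩, hk1⟩ := exists_lt_of_csInf_lt hSAn (lt_min hu.1 hv.1)
    obtain ⟨_, ⟨K2, hK2, rfl⟩, hk2⟩ := exists_lt_of_lt_csSup hSBn (max_lt hu.2 hv.2)
    rw [lt_min_iff] at hk1
    rw [max_lt_iff] at hk2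
    rcases nested hK1.1 hK2.1 hK1.2.2 hK2.2.2 (hK1.2.1 hz) (hK2.2.1 hz) with h | h
    · have := le_of_sub h hK2.2.2
      refine ⟨K2, hK2.1, ?_, ?_, hSsub _ hK2⟩
      · rw [mem_of_sub hK2.2.2]; constructor <;> linarith
      · rw [mem_of_sub hK2.2.2]; constructor <;> linarith
    · have := le_of_sub h hK1.2.2
      refine ⟨K1, hK1.1, ?_, ?_, hSsub _ hK1⟩
      · rw [mem_of_sub hK1.2.2]; constructor <;> linarith
      · rw [mem_of_sub hK1.2.2]; constructor <;> linarith
  refine ⟨A, hA, hSsub J hJS, hAP, fun M hM hAM hMP => ?_⟩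
  exact carrier_inj (subset_antisymm (hSsub M ⟨hM, (hSsub J hJS).trans hAM, hMP⟩) hAM)

end LamSys

/-! ### Construction of gaps -/

theorem sub_of_not_mem {P J : GoodInt} (ha : J.a ∉ P.dual.carrier) (hb : J.b ∉ P.dual.carrier) :
    J.carrier ⊆ P.carrier ∨ J.dual.carrier ⊆ P.carrier := by
  rw [mem_carrier, dual_a, dual_b, sbtw_iff P.a, crd_self] at ha hb
  have := crd_nonneg P.a J.a
  have := crd_nonneg P.a J.b
  have := crd_pos P.ne.symm
  rcases (crd_ne (q := P.a) J.ne).lt_or_gt with h | h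
  · exact Or.inl (sub_of_crd h (by grind))
  · exact Or.inr (sub_of_crd h (by simp only [dual_b]; grind))

/-- The endpoints of `J` are not separated by those of `P`. -/
def NL (P J : GoodInt) : Prop :=
  ¬ (J.a ∈ P.carrier ∧ J.b ∈ P.dual.carrier) ∧ ¬ (J.b ∈ P.carrier ∧ J.a ∈ P.dual.carrier)

theorem nl_of_mem {L : LamSys} {P J : GoodInt} (hP : P ∈ L.mem) (hJ : J ∈ L.mem) : NL P J :=
  ⟨fun h => LamSys.unl hP hJ h.1 h.2, fun h => LamSys.unl hP (L.dual_mem J hJ) h.1 h.2⟩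

theorem NL.sub_of_left {P J : GoodInt} (h : NL P J) (ha : J.a ∈ P.carrier) :
    J.carrier ⊆ P.carrier ∨ J.dual.carrier ⊆ P.carrier :=
  sub_of_not_mem (not_mem_dual ha) (fun hb => h.1 ⟨ha, hb⟩)

theorem NL.sub_of_right {P J : GoodInt} (h : NL P J) (hb : J.b ∈ P.carrier) :
    J.carrier ⊆ P.carrier ∨ J.dual.carrier ⊆ P.carrier :=
  sub_of_not_mem (fun ha => h.2 ⟨hb, ha⟩) (not_mem_dual hb)

theorem NL.cover {P J : GoodInt} (h : NL P J) :
    (J.carrier ⊆ P.carrier ∨ J.dual.carrier ⊆ P.carrier) ∨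
    (J.carrier ⊆ P.dual.carrier ∨ J.dual.carrier ⊆ P.dual.carrier) := by
  by_cases ha : J.a ∈ P.carrier
  · exact Or.inl (h.sub_of_left ha)
  · by_cases hb : J.b ∈ P.carrier
    · exact Or.inl (h.sub_of_right hb)
    · exact Or.inr (sub_of_not_mem ha hb)

/-- Three points and the open arcs between them cover the circle. -/
theorem eq_of_not_mem_triangle {x y z w : S1} (h : sbtw x y z) (h1 : ¬ sbtw x w y)
    (h2 : ¬ sbtw y w z) (h3 : ¬ sbtw z w x) : w = x ∨ w = y ∨ w = z := by
  by_contra hc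
  push Not at hc
  obtain ⟨e1, e2, e3⟩ := hc
  have e1 := crd_ne (q := x) e1
  have e2 := crd_ne (q := x) e2
  have e3 := crd_ne (q := x) e3
  rw [sbtw_iff x] at h h1 h2 h3
  grind

namespace LamSys

/-- The maximal elements of `L` among those contained in `P`. -/
def maxIn (L : LamSys) (P : GoodInt) : Set GoodInt :=
  {K | K ∈ L.mem ∧ K.carrier ⊆ P.carrier ∧
    ∀ M ∈ L.mem, K.carrier ⊆ M.carrier → M.carrier ⊆ P.carrier → M = K}

/-- The maximal elements of `L` inside the members of a family `A` of good intervals, which one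
thinks of as the sides of a polygon. -/
def gapOf (L : LamSys) (A : Set GoodInt) : Set GoodInt := {K | ∃ P ∈ A, K ∈ L.maxIn P}

/-- If no leaf of `L` crosses the polygon with sides `A`, then the region of the lamination
containing that polygon is a gap. -/
theorem gapOf_isGap {L : LamSys} {A : Set GoodInt}
    (hd : ∀ P ∈ A, ∀ Q ∈ A, P ≠ Q → Disjoint P.carrier Q.carrier)
    (hc : ∀ J ∈ L.mem, ∃ P ∈ A, J.carrier ⊆ P.carrier ∨ J.dual.carrier ⊆ P.carrier) :
    L.IsGap (L.gapOf A) := by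
  refine ⟨?_, ?_, ?_⟩
  · rintro K ⟨P, -, hK⟩
    exact hK.1
  · rintro I ⟨P, hP, hI⟩ J ⟨Q, hQ, hJ⟩ hIJ
    by_cases hPQ : P = Q
    · subst hPQ
      rw [Set.disjoint_left]
      intro z hz hz'
      rcases nested hI.1 hJ.1 hI.2.1 hJ.2.1 hz hz' with h | h
      · exact hIJ (hI.2.2 J hJ.1 h hJ.2.1).symm
      · exact hIJ (hJ.2.2 I hI.1 h hI.2.1)
    · exact (hd P hP Q hQ hPQ).mono hI.2.1 hJ.2.1
  · intro I hI
    obtain ⟨P, hP, h | h⟩ := hc I hI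
    · obtain ⟨K, hK, h1, h2, h3⟩ := exists_max hI h
      exact ⟨K, ⟨P, hP, hK, h2, h3⟩, Or.inl h1⟩
    · obtain ⟨K, hK, h1, h2, h3⟩ := exists_max (L.dual_mem I hI) h
      exact ⟨K, ⟨P, hP, hK, h2, h3⟩, Or.inr h1⟩

theorem mem_gapVerts_gapOf {L : LamSys} {A : Set GoodInt} {x : S1}
    (h : ∀ P ∈ A, x ∉ P.carrier) : x ∈ gapVerts (L.gapOf A) := by
  simp only [gapVerts, Set.mem_compl_iff, Set.mem_iUnion, not_exists]
  rintro K ⟨P, hP, hK⟩ hx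
  exact h P hP (hK.2.1 hx)

/-- The gap containing a good interval `P` as a diagonal (or as a side). -/
theorem bigon_isGap {L : LamSys} {P : GoodInt} (h : ∀ J ∈ L.mem, NL P J) :
    L.IsGap (L.gapOf {P, P.dual}) := by
  have hPd : Disjoint P.carrier P.dual.carrier := Set.disjoint_left.2 fun z hz => not_mem_dual hz
  apply gapOf_isGap
  · rintro _ (rfl | rfl) _ (rfl | rfl) hne
    · exact absurd rfl hne
    · exact hPd
    · exact hPd.symm
    · exact absurd rfl hne
  · intro J hJ
    rcases (h J hJ).cover with hJP | hJP
    · exact ⟨P, by simp, hJP⟩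
    · exact ⟨P.dual, by simp, hJP⟩

/-- The gap containing the ideal triangle with sides `P`, `Q`, `R`. -/
theorem triangle_isGap {L : LamSys} {P Q R : GoodInt} (h1 : P.b = Q.a) (h2 : Q.b = R.a)
    (h3 : R.b = P.a) (hs : sbtw P.a Q.a R.a)
    (h : ∀ J ∈ L.mem, NL P J ∧ NL Q J ∧ NL R J) :
    L.IsGap (L.gapOf {P, Q, R}) := by
  obtain ⟨x, y, hxy⟩ := P
  obtain ⟨y', z, hyz⟩ := Q
  obtain ⟨z', x', hzx⟩ := R
  simp only at h1 h2 h3 hs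
  subst h1 h2 h3
  have hs0 := hs
  rw [sbtw_iff x', crd_self] at hs
  have hPQ : Disjoint (⟨x', y, hxy⟩ : GoodInt).carrier (⟨y, z, hyz⟩ : GoodInt).carrier := by
    rw [Set.disjoint_left]; intro w; simp only [mem_carrier, sbtw_iff x', crd_self]; grind
  have hQR : Disjoint (⟨y, z, hyz⟩ : GoodInt).carrier (⟨z, x', hzx⟩ : GoodInt).carrier := by
    rw [Set.disjoint_left]; intro w; simp only [mem_carrier, sbtw_iff x', crd_self]; grind
  have hPR : Disjoint (⟨x', y, hxy⟩ : GoodInt).carrier (⟨z, x', hzx⟩ : GoodInt).carrier := by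
    rw [Set.disjoint_left]; intro w; simp only [mem_carrier, sbtw_iff x', crd_self]; grind
  apply gapOf_isGap
  · rintro _ (rfl | rfl | rfl) _ (rfl | rfl | rfl) hne
    · exact absurd rfl hne
    · exact hPQ
    · exact hPR
    · exact hPQ.symm
    · exact absurd rfl hne
    · exact hQR
    · exact hPR.symm
    · exact hQR.symm
    · exact absurd rfl hne
  · intro J hJ
    obtain ⟨n1, n2, n3⟩ := h J hJ
    by_cases a1 : J.a ∈ (⟨x', y, hxy⟩ : GoodInt).carrier
    · exact ⟨_, by simp, n1.sub_of_left a1⟩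
    by_cases a2 : J.a ∈ (⟨y, z, hyz⟩ : GoodInt).carrier
    · exact ⟨_, by simp, n2.sub_of_left a2⟩
    by_cases a3 : J.a ∈ (⟨z, x', hzx⟩ : GoodInt).carrier
    · exact ⟨_, by simp, n3.sub_of_left a3⟩
    by_cases b1 : J.b ∈ (⟨x', y, hxy⟩ : GoodInt).carrier
    · exact ⟨_, by simp, n1.sub_of_right b1⟩
    by_cases b2 : J.b ∈ (⟨y, z, hyz⟩ : GoodInt).carrier
    · exact ⟨_, by simp, n2.sub_of_right b2⟩
    by_cases b3 : J.b ∈ (⟨z, x', hzx⟩ : GoodInt).carrier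
    · exact ⟨_, by simp, n3.sub_of_right b3⟩
    have ha := eq_of_not_mem_triangle hs0 a1 a2 a3
    have hb := eq_of_not_mem_triangle hs0 b1 b2 b3
    have hne := J.ne
    -- both endpoints of `J` are vertices of the triangle, so they span a side
    have key : (J.a ∉ (⟨x', y, hxy⟩ : GoodInt).dual.carrier ∧
          J.b ∉ (⟨x', y, hxy⟩ : GoodInt).dual.carrier) ∨
        (J.a ∉ (⟨y, z, hyz⟩ : GoodInt).dual.carrier ∧
          J.b ∉ (⟨y, z, hyz⟩ : GoodInt).dual.carrier) ∨
        (J.a ∉ (⟨z, x', hzx⟩ : GoodInt).dual.carrier ∧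
          J.b ∉ (⟨z, x', hzx⟩ : GoodInt).dual.carrier) := by
      simp only [mem_carrier, dual_a, dual_b, sbtw_iff x', crd_self]
      have hx := crd_self x'
      rcases ha with ha | ha | ha <;> rcases hb with hb | hb | hb <;> rw [ha, hb] <;> grind
    rcases key with k | k | k
    · exact ⟨_, by simp, sub_of_not_mem k.1 k.2⟩
    · exact ⟨_, by simp, sub_of_not_mem k.1 k.2⟩
    · exact ⟨_, by simp, sub_of_not_mem k.1 k.2⟩

end LamSys

/-! ### Corners of gaps and density of endpoints -/

/-- A finite set misses a one-sided neighbourhood of each point. -/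
theorem exists_right_free {V : Set S1} (hV : V.Finite) (x : S1) :
    ∃ y, x ≠ y ∧ ∀ v ∈ V, ¬ sbtw x v y := by
  induction V, hV using Set.Finite.induction_on with
  | empty =>
    obtain ⟨y, hy⟩ := crd_surj x (t := 1 / 2) (by norm_num) (by norm_num)
    refine ⟨y, ?_, by simp⟩
    rintro rfl
    rw [crd_self] at hy
    norm_num at hy
  | @insert w V _ _ ih =>
    obtain ⟨y, hy, h⟩ := ih
    by_cases hw : sbtw x w y
    · refine ⟨w, (sbtw_ne hw).1, ?_⟩
      rintro v (rfl | hv) hs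
      · exact (sbtw_ne hs).2.1 rfl
      · refine h v hv ?_
        rw [sbtw_base] at *
        exact ⟨hs.1, hs.2.trans hw.2⟩
    · refine ⟨y, hy, ?_⟩
      rintro v (rfl | hv)
      · exact hw
      · exact h v hv

theorem exists_left_free {V : Set S1} (hV : V.Finite) (x : S1) :
    ∃ y, x ≠ y ∧ ∀ v ∈ V, ¬ sbtw y v x := by
  induction V, hV using Set.Finite.induction_on with
  | empty =>
    obtain ⟨y, hy⟩ := crd_surj x (t := 1 / 2) (by norm_num) (by norm_num)
    refine ⟨y, ?_, by simp⟩
    rintro rfl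
    rw [crd_self] at hy
    norm_num at hy
  | @insert w V _ _ ih =>
    obtain ⟨y, hy, h⟩ := ih
    by_cases hw : sbtw y w x
    · refine ⟨w, (sbtw_ne hw).2.1.symm, ?_⟩
      rintro v (rfl | hv) hs
      · exact (sbtw_ne hs).1 rfl
      · refine h v hv ?_
        have := crd_self x
        rw [sbtw_iff x] at *
        have := crd_nonneg x v
        have := crd_nonneg x y
        grind
    · refine ⟨y, hy, ?_⟩
      rintro v (rfl | hv)
      · exact hw
      · exact h v hv

namespace LamSys

/-- The endpoints of the sides of a gap are vertices. -/
theorem IsGap.ends {L : LamSys} {G : Set GoodInt} (hG : L.IsGap G) {K : GoodInt} (hK : K ∈ G) :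
    K.a ∈ gapVerts G ∧ K.b ∈ gapVerts G := by
  constructor
  · simp only [gapVerts, Set.mem_compl_iff, Set.mem_iUnion, not_exists]
    intro I hI h
    have hne : K ≠ I := by rintro rfl; exact not_mem_left _ h
    rcases sub_left (sub_dual_of_disjoint (hG.2.1 K hK I hI hne)) with e | e
    · rw [e] at h; exact not_mem_right I h
    · exact not_mem_dual h e
  · simp only [gapVerts, Set.mem_compl_iff, Set.mem_iUnion, not_exists]
    intro I hI h
    have hne : K ≠ I := by rintro rfl; exact not_mem_right _ h
    rcases sub_right (sub_dual_of_disjoint (hG.2.1 K hK I hI hne)) with e | e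
    · rw [e] at h; exact not_mem_left I h
    · exact not_mem_dual h e

/-- Every vertex of an ideal polygon is a corner between two sides. -/
theorem IsGap.of_finite {L : LamSys} {G : Set GoodInt} (hG : L.IsGap G)
    (hV : (gapVerts G).Finite) {x : S1} (hx : x ∈ gapVerts G) :
    (∃ I ∈ G, I.a = x) ∧ ∃ J ∈ G, J.b = x := by
  have hx' : ∀ I ∈ G, x ∉ I.carrier := by
    simpa [gapVerts, Set.mem_compl_iff, Set.mem_iUnion, not_exists] using hx
  have hmem : ∀ z, z ∉ gapVerts G → ∃ I ∈ G, z ∈ I.carrier := by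
    intro z hz
    simpa [gapVerts] using hz
  constructor
  · obtain ⟨y, hy, h⟩ := exists_right_free hV x
    obtain ⟨z, hz⟩ := exists_sbtw hy
    obtain ⟨I, hI, hzI⟩ := hmem z (fun hzV => h z hzV hz)
    refine ⟨I, hI, ?_⟩
    have h1 := h _ (hG.ends hI).1
    have h2 := hx' I hI
    by_contra hne
    have := crd_pos hne
    have hs := crd_self x
    rw [mem_carrier, sbtw_iff x] at h2 hzI
    rw [sbtw_base] at hz h1
    grind
  · obtain ⟨y, hy, h⟩ := exists_left_free hV x
    obtain ⟨z, hz⟩ := exists_sbtw hy.symm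
    obtain ⟨I, hI, hzI⟩ := hmem z (fun hzV => h z hzV hz)
    refine ⟨I, hI, ?_⟩
    have h1 := h _ (hG.ends hI).2
    have h2 := hx' I hI
    by_contra hne
    have := crd_pos hne
    have hs := crd_self x
    rw [mem_carrier, sbtw_iff x] at h2 hzI
    rw [sbtw_iff x] at hz h1
    have := crd_nonneg x I.a
    have := crd_nonneg x y
    grind

/-- Going around a polygon or a crown, each side is followed by another one. -/
theorem QuiteFull.next {L : LamSys} (hL : L.QuiteFull) {G : Set GoodInt} (hG : L.IsGap G)
    {I : GoodInt} (hI : I ∈ G) : ∃ J ∈ G, J.a = I.b := by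
  rcases hL G hG with hV | ⟨t, p, -, hne, rfl, -⟩
  · exact (hG.of_finite hV (hG.ends hI).2).1
  · obtain ⟨k, -, hk⟩ := hI
    exact ⟨⟨t (k + 1), t (k + 1 + 1), hne _⟩, ⟨k + 1, rfl, rfl⟩, hk.symm⟩

/-- Of two vertices of a gap, at least one is a corner between two sides: only the pivot of a crown
is not. -/
theorem QuiteFull.corner {L : LamSys} (hL : L.QuiteFull) {G : Set GoodInt} (hG : L.IsGap G)
    {x y : S1} (hxy : x ≠ y) (hx : x ∈ gapVerts G) (hy : y ∈ gapVerts G) :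
    ∃ z, (z = x ∨ z = y) ∧ (∃ I ∈ G, I.a = z) ∧ ∃ J ∈ G, J.b = z := by
  rcases hL G hG with hV | ⟨t, p, -, hne, hGe, hv⟩
  · exact ⟨x, Or.inl rfl, hG.of_finite hV hx⟩
  · have key : ∀ w ∈ gapVerts G, w ≠ p → (∃ I ∈ G, I.a = w) ∧ ∃ J ∈ G, J.b = w := by
      intro w hw hwp
      rw [hv] at hw
      rcases hw with ⟨k, rfl⟩ | hw
      · rw [hGe]
        refine ⟨⟨⟨t k, t (k + 1), hne k⟩, ⟨k, rfl, rfl⟩, rfl⟩, ?_⟩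
        refine ⟨⟨t (k - 1), t (k - 1 + 1), hne _⟩, ⟨k - 1, rfl, rfl⟩, ?_⟩
        simp
      · exact absurd hw hwp
    by_cases h : x = p
    · exact ⟨y, Or.inr rfl, key y hy (by rintro rfl; exact hxy h)⟩
    · exact ⟨x, Or.inl rfl, key x hx h⟩

theorem bigon_verts {L : LamSys} (P : GoodInt) :
    P.a ∈ gapVerts (L.gapOf {P, P.dual}) ∧ P.b ∈ gapVerts (L.gapOf {P, P.dual}) := by
  constructor <;> apply mem_gapVerts_gapOf <;> rintro _ (rfl | rfl)
  · exact not_mem_left _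
  · exact not_mem_right P.dual
  · exact not_mem_right _
  · exact not_mem_left P.dual

theorem bigon_sub {L : LamSys} {P J : GoodInt} (h : J ∈ L.gapOf {P, P.dual}) :
    J ∈ L.mem ∧ (J.carrier ⊆ P.carrier ∨ J.carrier ⊆ P.dual.carrier) := by
  obtain ⟨_, rfl | rfl, hJ⟩ := h
  · exact ⟨hJ.1, Or.inl hJ.2.1⟩
  · exact ⟨hJ.1, Or.inr hJ.2.1⟩

/-- A diagonal which crosses no leaf has an endpoint at a corner of the gap containing it. -/
theorem diagonal_corner {L : LamSys} (hL : L.QuiteFull) {P : GoodInt} (h : ∀ J ∈ L.mem, NL P J) :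
    ∃ z, (z = P.a ∨ z = P.b) ∧
      (∃ I ∈ L.mem, I.a = z ∧ (I.carrier ⊆ P.carrier ∨ I.carrier ⊆ P.dual.carrier)) ∧
      ∃ J ∈ L.mem, J.b = z ∧ (J.carrier ⊆ P.carrier ∨ J.carrier ⊆ P.dual.carrier) := by
  obtain ⟨z, hz, ⟨I, hI, hIz⟩, J, hJ, hJz⟩ :=
    hL.corner (bigon_isGap h) P.ne (bigon_verts P).1 (bigon_verts P).2
  exact ⟨z, hz, ⟨I, (bigon_sub hI).1, hIz, (bigon_sub hI).2⟩,
    J, (bigon_sub hJ).1, hJz, (bigon_sub hJ).2⟩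

theorem mem_E {L : LamSys} {x : S1} : x ∈ L.E ↔ ∃ I ∈ L.mem, I.a = x := by
  simp only [E, Set.mem_iUnion, GoodInt.verts, Set.mem_insert_iff, Set.mem_singleton_iff,
    exists_prop]
  constructor
  · rintro ⟨I, hI, rfl | rfl⟩
    · exact ⟨I, hI, rfl⟩
    · exact ⟨I.dual, L.dual_mem I hI, rfl⟩
  · rintro ⟨I, hI, rfl⟩
    exact ⟨I, hI, Or.inl rfl⟩

theorem mem_E' {L : LamSys} {I : GoodInt} (hI : I ∈ L.mem) : I.a ∈ L.E ∧ I.b ∈ L.E :=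
  ⟨mem_E.2 ⟨I, hI, rfl⟩, mem_E.2 ⟨I.dual, L.dual_mem I hI, rfl⟩⟩

/-- Two points off the endpoint set are separated by a leaf. -/
theorem exists_sep {L : LamSys} (hL : L.QuiteFull) {c d : S1} (hcd : c ≠ d) (hc : c ∉ L.E)
    (hd : d ∉ L.E) : ∃ I ∈ L.mem, c ∈ I.carrier ∧ d ∈ I.dual.carrier := by
  by_contra hno
  push Not at hno
  have key : ∀ J ∈ L.mem, NL ⟨c, d, hcd⟩ J := by
    intro J hJ
    have e1 : J.a ≠ c := by rintro rfl; exact hc (mem_E' hJ).1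
    have e2 : J.b ≠ c := by rintro rfl; exact hc (mem_E' hJ).2
    have e3 : J.a ≠ d := by rintro rfl; exact hd (mem_E' hJ).1
    have e4 : J.b ≠ d := by rintro rfl; exact hd (mem_E' hJ).2
    have h1 := hno J hJ
    have h2 := hno J.dual (L.dual_mem J hJ)
    clear hno
    have f1 := crd_pos e1
    have f2 := crd_pos e2
    have f3 := crd_ne (q := c) e3
    have f4 := crd_ne (q := c) e4
    have f5 := crd_pos hcd.symm
    simp only [NL, mem_carrier, dual_a, dual_b, sbtw_iff c, crd_self] at h1 h2 ⊢
    grind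
  obtain ⟨z, hz, ⟨I, hI, hIz, -⟩, -⟩ := diagonal_corner hL key
  rcases hz with rfl | rfl
  · exact hc (mem_E.2 ⟨I, hI, hIz⟩)
  · exact hd (mem_E.2 ⟨I, hI, hIz⟩)

/-- The endpoint set is dense: an arc free of endpoints would contain two points which are
separated by a leaf, hence an endpoint of it. -/
theorem dense_E {L : LamSys} (hL : L.QuiteFull) {u v : S1} (h : u ≠ v) :
    ∃ c, sbtw u c v ∧ c ∈ L.E := by
  by_contra hno
  push Not at hno
  obtain ⟨c, hc⟩ := exists_sbtw h
  obtain ⟨d, hd⟩ := exists_sbtw (sbtw_ne hc).2.1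
  have hd' : sbtw u d v := by
    have hs := crd_self u
    clear hno
    simp only [sbtw_iff u] at hc hd ⊢
    have := crd_nonneg u v
    have := crd_nonneg u d
    grind
  obtain ⟨I, hI, h1, h2⟩ := exists_sep hL (sbtw_ne hd).1 (hno c hc) (hno d hd')
  have h3 := fun h => hno _ h (mem_E' hI).1
  have h4 := fun h => hno _ h (mem_E' hI).2
  clear hno
  have := crd_nonneg u I.a
  have := crd_nonneg u I.b
  simp only [mem_carrier, dual_a, dual_b, sbtw_iff u, crd_self] at h1 h2 h3 h4 hc hd hd'
  grind

end LamSys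

/-! ### Leaves with a common endpoint -/

namespace LamSys

/-- `x` and `y` are the endpoints of a leaf of `L`. -/
def Leaf (L : LamSys) (x y : S1) : Prop := ∃ I ∈ L.mem, I.a = x ∧ I.b = y

theorem Leaf.symm {L : LamSys} {x y : S1} (h : L.Leaf x y) : L.Leaf y x := by
  obtain ⟨I, hI, rfl, rfl⟩ := h
  exact ⟨I.dual, L.dual_mem I hI, rfl, rfl⟩

theorem leaf_of_mem {L : LamSys} {I : GoodInt} (h : I ∈ L.mem) : L.Leaf I.a I.b :=
  ⟨I, h, rfl, rfl⟩

theorem mem_of_leaf {L : LamSys} {I : GoodInt} (h : L.Leaf I.a I.b) : I ∈ L.mem := by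
  obtain ⟨J, hJ, h1, h2⟩ := h
  rwa [← GoodInt.ext' h1 h2]

theorem mem_maxIn_self {L : LamSys} {P : GoodInt} (h : P ∈ L.mem) : P ∈ L.maxIn P :=
  ⟨h, subset_rfl, fun _ _ h1 h2 => carrier_inj (subset_antisymm h2 h1)⟩

/-- Two leaves sharing the endpoint `x` have between them a non-leaf gap with a corner at `x`. -/
theorem fan_gap {L : LamSys} (hD : ∀ u v : S1, u ≠ v → ∃ c, sbtw u c v ∧ c ∉ L.E)
    {x w1 w2 : S1} (h1 : L.Leaf x w1) (h2 : L.Leaf x w2) (hs : sbtw x w1 w2) :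
    ∃ G, L.IsGap G ∧ ¬ IsLeafGap G ∧ x ∈ gapVerts G ∧ ∃ P ∈ G, P.a = x ∧
      crd x w1 ≤ crd x P.b ∧ crd x P.b < crd x w2 := by
  obtain ⟨n1, n2, n3⟩ := sbtw_ne hs
  obtain ⟨c, hc, hcE⟩ := hD w1 w2 n2
  have hs' := sbtw_base.1 hs
  have hx0 := crd_self x
  have hc' : crd x w1 < crd x c ∧ crd x c < crd x w2 := by
    rw [sbtw_iff x] at hc; grind
  have hcx : x ≠ c := by rintro rfl; linarith [hs'.1]
  -- the side `(x, w')`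
  obtain ⟨K, hK, hIK, hKP, hKmax⟩ := exists_max (L := L) (J := ⟨x, w1, n1⟩)
    (P := ⟨x, c, hcx⟩) (mem_of_leaf h1)
    (sub_of_crd (by change crd x x < crd x w1; linarith)
      (by change crd x w1 ≤ crd x c; linarith))
  have k1 := le_of_sub hIK hKP
  have k2 := crd_of_sub hKP
  have hKa : K.a = x := by
    have e : crd x K.a ≤ crd x x := k1.1
    have := crd_nonneg x K.a
    exact crd_inj (q := x) (by linarith)
  have hKb : crd x K.b < crd x c := by
    refine lt_of_le_of_ne k2.2 (crd_ne ?_)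
    rintro rfl
    exact hcE (mem_E' hK).2
  have hKb' : crd x w1 ≤ crd x K.b := k1.2
  -- the side `(w'', x)`
  have hc0 := crd_self c
  have hw2c : 0 < crd c w2 ∧ crd c w2 < crd c x := by
    rw [← sbtw_base, sbtw_iff x]; grind
  obtain ⟨R, hR, hIR, hRP, hRmax⟩ := exists_max (L := L) (J := ⟨w2, x, n3.symm⟩)
    (P := ⟨c, x, hcx.symm⟩) (mem_of_leaf h2.symm)
    (sub_of_crd (by change crd c w2 < crd c x; linarith) le_rfl)
  have r1 := le_of_sub hIR hRP
  have r2 := crd_of_sub hRP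
  have hRb : R.b = x := by
    have e1 : crd c x ≤ crd c R.b := r1.2
    have e2 : crd c R.b ≤ crd c x := r2.2
    exact crd_inj (q := c) (by linarith)
  have hRa : crd x c < crd x R.a ∧ crd x R.a ≤ crd x w2 := by
    have hne : R.a ≠ c := by rintro rfl; exact hcE (mem_E' hR).1
    have e1 : crd c R.a ≤ crd c w2 := r1.1
    by_cases hw : R.a = w2
    · rw [hw]; exact ⟨hc'.2, le_rfl⟩
    · have : sbtw c R.a w2 :=
        sbtw_base.2 ⟨crd_pos hne, lt_of_le_of_ne e1 (crd_ne hw)⟩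
      rw [sbtw_iff x] at this
      grind
  -- the third side
  have hne : K.b ≠ R.a := by intro e; rw [e] at hKb; linarith [hRa.1]
  have hKs := crd_nonneg x K.b
  have claim : ∀ J ∈ L.mem, ¬ (J.a ∈ (⟨K.b, R.a, hne⟩ : GoodInt).carrier ∧
      J.b ∈ (⟨K.b, R.a, hne⟩ : GoodInt).dual.carrier) := by
    rintro J hJ ⟨ja, jb⟩
    have m1 := (nl_of_mem hK hJ).2
    have m2 := (nl_of_mem hR hJ).2
    simp only [mem_carrier, dual_a, dual_b, hKa, hRb, sbtw_iff x, hx0] at ja jb m1 m2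
    have ja' : crd x K.b < crd x J.a ∧ crd x J.a < crd x R.a := by grind
    have hJb : J.b = x := by
      by_contra hb
      have := crd_pos hb
      grind
    have hjc : J.a ≠ c := by rintro rfl; exact hcE (mem_E' hJ).1
    rcases (crd_ne (q := x) hjc).lt_or_gt with hlt | hlt
    · have := hKmax J.dual (L.dual_mem J hJ)
        (sub_of_sub hKP (sub_of_crd (P := ⟨x, c, hcx⟩)
            (by simp only [dual_a, dual_b, hJb]; linarith)
            (by simp only [dual_b]; linarith))
          (by simp only [dual_a, hKa, hJb]; linarith) (by simp only [dual_b]; linarith))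
        (sub_of_crd (P := ⟨x, c, hcx⟩)
            (by simp only [dual_a, dual_b, hJb]; linarith)
            (by simp only [dual_b]; linarith))
      have e : J.a = K.b := congrArg GoodInt.b this
      rw [e] at ja'; linarith [ja'.1]
    · have hcJ : crd c J.a < crd c R.a := by
        have : sbtw c J.a R.a := by rw [sbtw_iff x]; grind
        exact (sbtw_base.1 this).2
      have hJx : crd c J.a < crd c J.b := by
        rw [hJb]; have := r2.1; rw [hRb] at this; linarith
      have hJP : J.carrier ⊆ (⟨c, x, hcx.symm⟩ : GoodInt).carrier :=
        sub_of_crd hJx (by rw [hJb])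
      have := hRmax J hJ (sub_of_sub hRP hJP hcJ.le (by rw [hJb, hRb])) hJP
      rw [this] at ja'; linarith [ja'.2]
  have hG := triangle_isGap (L := L) (P := K) (Q := ⟨K.b, R.a, hne⟩) (R := R) rfl rfl
    (hRb.trans hKa.symm) (by rw [hKa]; exact sbtw_base.2 ⟨by linarith, by
      change crd x K.b < _; linarith⟩)
    (fun J hJ => ⟨nl_of_mem hK hJ, ⟨claim J hJ, claim J.dual (L.dual_mem J hJ)⟩,
      nl_of_mem hR hJ⟩)
  have hKG : K ∈ L.gapOf {K, ⟨K.b, R.a, hne⟩, R} := ⟨K, by simp, mem_maxIn_self hK⟩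
  have hRG : R ∈ L.gapOf {K, ⟨K.b, R.a, hne⟩, R} := ⟨R, by simp, mem_maxIn_self hR⟩
  refine ⟨_, hG, ?_, hKa ▸ (hG.ends hKG).1, K, hKG, hKa, hKb', by linarith⟩
  rintro ⟨I, hI⟩
  rw [hI] at hKG hRG
  have f1 : K.a ≠ R.a := by
    intro e; rw [← e, hKa] at hRa; linarith [crd_nonneg x c]
  rcases hKG with e | e <;> rcases hRG with e' | e' <;> subst e
  · rw [e'] at f1; exact f1 rfl
  · rw [e'] at hne; exact hne rfl
  · rw [e'] at hne; exact hne rfl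
  · rw [e'] at f1; exact f1 rfl

/-- Three leaves with a common endpoint, in a given order, are impossible. -/
theorem fan_aux {L : LamSys} (hL : L.Loose)
    (hD : ∀ u v : S1, u ≠ v → ∃ c, sbtw u c v ∧ c ∉ L.E)
    {x w1 w2 w3 : S1} (h1 : L.Leaf x w1) (h2 : L.Leaf x w2) (h3 : L.Leaf x w3)
    (h12 : crd x w1 < crd x w2) (h23 : crd x w2 < crd x w3) : False := by
  have hp : ∀ w, L.Leaf x w → 0 < crd x w := by
    rintro w ⟨I, -, rfl, rfl⟩
    exact crd_pos I.ne.symm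
  obtain ⟨G, hG, hGn, hGx, P, hP, hPa, hP1, hP2⟩ :=
    fan_gap hD h1 h2 (sbtw_base.2 ⟨hp _ h1, h12⟩)
  obtain ⟨H, hH, hHn, hHx, Q, hQ, hQa, hQ1, hQ2⟩ :=
    fan_gap hD h2 h3 (sbtw_base.2 ⟨hp _ h2, h23⟩)
  have hne : G ≠ H := by
    rintro rfl
    have hPQ : P ≠ Q := by rintro rfl; linarith
    have hd := hG.2.1 P hP Q hQ hPQ
    obtain ⟨z, hz⟩ := carrier_nonempty P
    refine Set.disjoint_left.1 hd hz ?_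
    simp only [mem_carrier, hPa, hQa, sbtw_base] at hz ⊢
    exact ⟨hz.1, by linarith [hz.2]⟩
  exact Set.disjoint_left.1 (hL G H hG hH hGn hHn hne) hGx hHx

/-- No point is the endpoint of three leaves: the two gaps between them would share a vertex. -/
theorem fan {L : LamSys} (hL : L.Loose)
    (hD : ∀ u v : S1, u ≠ v → ∃ c, sbtw u c v ∧ c ∉ L.E)
    {x w1 w2 w3 : S1} (h1 : L.Leaf x w1) (h2 : L.Leaf x w2) (h3 : L.Leaf x w3)
    (h12 : w1 ≠ w2) (h23 : w2 ≠ w3) (h13 : w1 ≠ w3) : False := by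
  rcases (crd_ne (q := x) h12).lt_or_gt with a | a <;>
  rcases (crd_ne (q := x) h23).lt_or_gt with b | b <;>
  rcases (crd_ne (q := x) h13).lt_or_gt with c | c
  · exact fan_aux hL hD h1 h2 h3 a b
  · linarith
  · exact fan_aux hL hD h1 h3 h2 c b
  · exact fan_aux hL hD h3 h1 h2 c a
  · exact fan_aux hL hD h2 h1 h3 a c
  · exact fan_aux hL hD h2 h3 h1 b c
  · linarith
  · exact fan_aux hL hD h3 h2 h1 b a

end LamSys

/-! ### Automorphisms permute the leaves -/

theorem sbtw_total {x y z : S1} (h1 : x ≠ y) (h2 : y ≠ z) (h3 : x ≠ z) :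
    sbtw x y z ∨ sbtw z y x := by
  have e1 := crd_ne (q := x) h1
  have e2 := crd_ne (q := x) h2
  have e3 := crd_ne (q := x) h3
  simp only [sbtw_iff x]
  grind

theorem sbtw_asymm' {x y z : S1} (h1 : sbtw x y z) (h2 : sbtw z y x) : False := by
  rw [sbtw_iff x] at h1 h2
  grind

theorem mem_or (I : GoodInt) (z : S1) :
    z ∈ I.carrier ∨ z = I.a ∨ z = I.b ∨ z ∈ I.dual.carrier := by
  by_cases h1 : z = I.a
  · exact Or.inr (Or.inl h1)
  by_cases h2 : z = I.b
  · exact Or.inr (Or.inr (Or.inl h2))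
  rcases sbtw_total (Ne.symm h1) h2 I.ne with h | h
  · exact Or.inl h
  · exact Or.inr (Or.inr (Or.inr h))

/-- A permutation of the circle which preserves the circular order and acts on the leaves of `L`.
Unlike the definition of an automorphism, this is visibly stable under inversion; continuity plays
no role in the argument. -/
structure Sym (L : LamSys) (h : Equiv.Perm S1) : Prop where
  ord : ∀ x y z, sbtw (h x) (h y) (h z) ↔ sbtw x y z
  leaf : ∀ x y, L.Leaf (h x) (h y) ↔ L.Leaf x y

theorem PosHomeo.ord {g : Equiv.Perm S1} (hg : PosHomeo g) (x y z : S1) :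
    sbtw (g x) (g y) (g z) ↔ sbtw x y z := by
  refine ⟨fun h => ?_, hg.2.2 x y z⟩
  obtain ⟨h1, h2, h3⟩ := sbtw_ne h
  rcases sbtw_total (x := x) (y := y) (z := z) (fun e => h1 (e ▸ rfl)) (fun e => h2 (e ▸ rfl))
    (fun e => h3 (e ▸ rfl)) with h' | h'
  · exact h'
  · exact (sbtw_asymm' h (hg.2.2 _ _ _ h')).elim

theorem LamSys.InAut.leaf {L : LamSys} {g : Equiv.Perm S1} (hg : L.InAut g) {x y : S1}
    (h : L.Leaf x y) : L.Leaf (g x) (g y) := by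
  obtain ⟨I, hI, rfl, rfl⟩ := h
  obtain ⟨J, hJ, hJI⟩ := hg.2 I hI
  have : J = ⟨g I.a, g I.b, fun e => I.ne (g.injective e)⟩ := by
    apply carrier_inj
    rw [hJI]
    ext z
    rw [← g.apply_symm_apply z]
    simp only [Set.mem_image, EmbeddingLike.apply_eq_iff_eq, exists_eq_right, mem_carrier]
    exact (hg.1.ord _ _ _).symm
  rw [this] at hJ
  exact ⟨_, hJ, rfl, rfl⟩

/-- Automorphisms permute the leaves: if a leaf had a preimage which is not a leaf, this preimage
would be a diagonal of a gap, and the image of a corner of this gap would be the endpoint of three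
leaves. -/
theorem LamSys.InAut.sym {L : LamSys} (hL : L.QuiteFull) (hL' : L.Loose)
    (hD : ∀ u v : S1, u ≠ v → ∃ c, sbtw u c v ∧ c ∉ L.E)
    {g : Equiv.Perm S1} (hg : L.InAut g) : Sym L g := by
  refine ⟨hg.1.ord, fun x y => ⟨fun h => ?_, hg.leaf⟩⟩
  by_contra hno
  have hxy : x ≠ y := by
    rintro rfl
    obtain ⟨I, -, h1, h2⟩ := h
    exact I.ne (h1.trans h2.symm)
  have key : ∀ J ∈ L.mem, NL ⟨x, y, hxy⟩ J := by
    intro J hJ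
    have := nl_of_mem (P := ⟨g x, g y, fun e => hxy (g.injective e)⟩)
      (J := ⟨g J.a, g J.b, fun e => J.ne (g.injective e)⟩) (LamSys.mem_of_leaf h)
      (LamSys.mem_of_leaf (hg.leaf (LamSys.leaf_of_mem hJ)))
    simpa only [NL, mem_carrier, dual_a, dual_b, hg.1.ord] using this
  have three : ∀ z w p q, L.Leaf (g z) (g w) → L.Leaf z p → L.Leaf z q → p ≠ w → q ≠ w →
      p ≠ q → False := by
    intro z w p q hw hp hq e1 e2 e3
    exact LamSys.fan hL' hD hw (hg.leaf hp) (hg.leaf hq) (fun e => e1 (g.injective e).symm)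
      (fun e => e3 (g.injective e)) (fun e => e2 (g.injective e).symm)
  obtain ⟨z, hz, ⟨I, hI, hIz, hIs⟩, J, hJ, hJz, hJs⟩ := LamSys.diagonal_corner hL key
  have hI' := LamSys.leaf_of_mem hI
  have hJ' := (LamSys.leaf_of_mem hJ).symm
  rcases hz with hz | hz
  · replace hz : z = x := hz
    rw [hz] at hIz hJz
    rw [hIz] at hI'
    rw [hJz] at hJ'
    have e1 : I.b ≠ y := by rintro rfl; exact hno hI'
    have e2 : J.a ≠ y := by rintro rfl; exact hno hJ'
    refine three x y _ _ h hI' hJ' e1 e2 fun e => ?_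
    have f1 : sbtw x I.b y := by
      rcases hIs with hs | hs
      · exact (sub_right hs).resolve_left e1
      · rcases sub_left hs with h | h
        · exact absurd (hIz.symm.trans h) hxy
        · rw [hIz] at h; exact absurd rfl (sbtw_ne h).2.1
    have f2 : sbtw y J.a x := by
      rcases hJs with hs | hs
      · rcases sub_right hs with h | h
        · exact absurd (hJz.symm.trans h) hxy
        · rw [hJz] at h; exact absurd rfl (sbtw_ne h).1
      · exact (sub_left hs).resolve_left e2
    rw [e] at f1
    exact sbtw_asymm' f1 f2
  · replace hz : z = y := hz
    rw [hz] at hIz hJz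
    rw [hIz] at hI'
    rw [hJz] at hJ'
    have e1 : I.b ≠ x := by rintro rfl; exact hno hI'.symm
    have e2 : J.a ≠ x := by rintro rfl; exact hno hJ'.symm
    refine three y x _ _ h.symm hI' hJ' e1 e2 fun e => ?_
    have f1 : sbtw y I.b x := by
      rcases hIs with hs | hs
      · rcases sub_left hs with h | h
        · exact absurd (hIz.symm.trans h) hxy.symm
        · rw [hIz] at h; exact absurd rfl (sbtw_ne h).2.1
      · exact (sub_right hs).resolve_left e1
    have f2 : sbtw x J.a y := by
      rcases hJs with hs | hs
      · exact (sub_left hs).resolve_left e2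
      · rcases sub_right hs with h | h
        · exact absurd (hJz.symm.trans h) hxy.symm
        · rw [hJz] at h; exact absurd rfl (sbtw_ne h).1
    rw [e] at f1
    exact sbtw_asymm' f1 f2

theorem Sym.symm {L : LamSys} {h : Equiv.Perm S1} (hh : Sym L h) : Sym L h.symm :=
  ⟨fun x y z => by rw [← hh.ord]; simp, fun x y => by rw [← hh.leaf]; simp⟩

/-! ### Order-preserving permutations with a fixed point -/

/-- Seen from a fixed point, an order-preserving permutation is increasing. -/
theorem crd_lt_iff {h : Equiv.Perm S1} (ho : ∀ x y z, sbtw (h x) (h y) (h z) ↔ sbtw x y z) {a : S1}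
    (ha : h a = a) (x y : S1) : crd a (h x) < crd a (h y) ↔ crd a x < crd a y := by
  have hs := crd_self a
  by_cases hx : x = a
  · subst hx
    rw [ha, hs]
    by_cases hy : y = x
    · rw [hy, ha]
    · have : h y ≠ x := fun e => hy (h.injective (e.trans ha.symm))
      simp [crd_pos hy, crd_pos this]
  · have h1 : h x ≠ a := fun e => hx (h.injective (e.trans ha.symm))
    have := ho a x y
    rw [ha, sbtw_base, sbtw_base] at this
    simpa [crd_pos hx, crd_pos h1] using this

theorem crd_le_iff {h : Equiv.Perm S1} (ho : ∀ x y z, sbtw (h x) (h y) (h z) ↔ sbtw x y z) {a : S1}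
    (ha : h a = a) (x y : S1) : crd a (h x) ≤ crd a (h y) ↔ crd a x ≤ crd a y := by
  rw [← not_lt, ← not_lt, crd_lt_iff ho ha]

/-- The supremum of a bounded invariant set is a fixed point. -/
theorem exists_sup {h : Equiv.Perm S1} (ho : ∀ x y z, sbtw (h x) (h y) (h z) ↔ sbtw x y z) {a : S1}
    (ha : h a = a) {X : Set S1} (hne : X.Nonempty) (h1 : ∀ x ∈ X, h x ∈ X)
    (h2 : ∀ x ∈ X, h.symm x ∈ X) {y : S1} (hy : ∀ x ∈ X, crd a x ≤ crd a y) :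
    ∃ W, h W = W ∧ (∀ x ∈ X, crd a x ≤ crd a W) ∧ crd a W ≤ crd a y := by
  have hb : BddAbove (crd a '' X) := ⟨crd a y, by rintro _ ⟨x, hx, rfl⟩; exact hy x hx⟩
  have hn : (crd a '' X).Nonempty := hne.image _
  have hle : sSup (crd a '' X) ≤ crd a y :=
    csSup_le hn (by rintro _ ⟨x, hx, rfl⟩; exact hy x hx)
  obtain ⟨x0, hx0⟩ := hne
  have h0 : 0 ≤ sSup (crd a '' X) := (crd_nonneg a x0).trans (le_csSup hb ⟨x0, hx0, rfl⟩)
  obtain ⟨W, hW⟩ := crd_surj a h0 (hle.trans_lt (crd_lt_one a y))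
  have hup : ∀ x ∈ X, crd a x ≤ crd a W := fun x hx => hW ▸ le_csSup hb ⟨x, hx, rfl⟩
  have hlub : ∀ z, (∀ x ∈ X, crd a x ≤ crd a z) → crd a W ≤ crd a z := fun z hz => by
    rw [hW]
    exact csSup_le hn (by rintro _ ⟨x, hx, rfl⟩; exact hz x hx)
  refine ⟨W, crd_inj (q := a) (le_antisymm ?_ ?_), hup, hW ▸ hle⟩
  · have : crd a W ≤ crd a (h.symm W) := hlub _ fun x hx => by
      rw [← crd_le_iff ho ha, Equiv.apply_symm_apply]
      exact hup _ (h1 x hx)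
    rwa [← crd_le_iff ho ha, Equiv.apply_symm_apply] at this
  · refine hlub _ fun x hx => ?_
    rw [← h.apply_symm_apply x, crd_le_iff ho ha]
    exact hup _ (h2 x hx)

/-- A closed arc `[u, v]` inside `(a, b)` is not mapped into itself: the supremum of the iterates
of `u` would be a third fixed point. -/
theorem no_inv {h : Equiv.Perm S1} (ho : ∀ x y z, sbtw (h x) (h y) (h z) ↔ sbtw x y z) {a : S1}
    (ha : h a = a) {b : S1} (hf : ∀ x, h x = x → x = a ∨ x = b) {u v : S1} (hu : u ≠ a)
    (huv : crd a u ≤ crd a v) (hvb : crd a v < crd a b) (h1 : crd a u ≤ crd a (h u))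
    (h2 : crd a (h v) ≤ crd a v) : False := by
  have hm : ∀ n : ℕ, crd a (h^[n] u) ≤ crd a (h^[n + 1] u) := by
    intro n
    induction n with
    | zero => exact h1
    | succ n ih =>
      rw [Function.iterate_succ_apply', Function.iterate_succ_apply' h (n + 1)]
      exact (crd_le_iff ho ha _ _).2 ih
  have hv : ∀ n : ℕ, crd a (h^[n] u) ≤ crd a v := by
    intro n
    induction n with
    | zero => exact huv
    | succ n ih =>
      rw [Function.iterate_succ_apply']
      exact ((crd_le_iff ho ha _ _).2 ih).trans h2
  obtain ⟨W, hW, hup, hWv⟩ := exists_sup ho ha (X := {x | ∃ n : ℕ, crd a x ≤ crd a (h^[n] u)})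
    (y := v) ⟨u, 0, le_rfl⟩
    (by
      rintro x ⟨n, hn⟩
      refine ⟨n + 1, ?_⟩
      rw [Function.iterate_succ_apply', crd_le_iff ho ha]
      exact hn)
    (by
      rintro x ⟨n, hn⟩
      refine ⟨n, ?_⟩
      rw [← crd_le_iff ho ha, Equiv.apply_symm_apply, ← Function.iterate_succ_apply' h]
      exact hn.trans (hm n))
    (by rintro x ⟨n, hn⟩; exact hn.trans (hv n))
  have hpos := crd_pos hu
  have hu' := hup u ⟨0, le_rfl⟩
  rcases hf W hW with rfl | rfl
  · rw [crd_self] at hu'; linarith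
  · linarith

/-! ### A leaf separating the fixed points -/

/-- The only leaf which can end at one of the two fixed points is the one joining them. -/
theorem leaf_fixed {L : LamSys} (hL' : L.Loose)
    (hD : ∀ u v : S1, u ≠ v → ∃ c, sbtw u c v ∧ c ∉ L.E) {h : Equiv.Perm S1} (hh : Sym L h)
    {a b : S1} (ha : h a = a) (hf : ∀ x, h x = x → x = a ∨ x = b) {v : S1} (hv : L.Leaf a v) :
    v = b := by
  by_contra hvb
  have hva : v ≠ a := by
    rintro rfl
    obtain ⟨I, -, h1, h2⟩ := hv
    exact I.ne (h1.trans h2.symm)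
  have n1 : h v ≠ v := fun e => (hf v e).elim hva hvb
  have n2 : h (h v) ≠ h v := fun e => n1 (h.injective e)
  have l1 : L.Leaf a (h v) := by have := (hh.leaf a v).2 hv; rwa [ha] at this
  have l2 : L.Leaf a (h (h v)) := by have := (hh.leaf a (h v)).2 l1; rwa [ha] at this
  refine LamSys.fan hL' hD hv l1 l2 n1.symm n2.symm fun e => ?_
  rcases (crd_ne (q := a) n1).lt_or_gt with c | c
  · have := (crd_lt_iff hh.ord ha (h v) v).2 c
    rw [← e] at this; linarith
  · have := (crd_lt_iff hh.ord ha v (h v)).2 c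
    rw [← e] at this; linarith

/-- If no leaf other than `{a, b}` ends at `a`, then the arc `(a, b)` between the fixed points has
a point which is covered by none of the leaves with both endpoints strictly inside this arc. -/
theorem exists_uncovered {L : LamSys} {h : Equiv.Perm S1} (hh : Sym L h) {a b : S1}
    (ha : h a = a) (hb : h b = b) (hf : ∀ x, h x = x → x = a ∨ x = b)
    (hl : ∀ v, L.Leaf a v → v = b) {c : S1}
    (hc : sbtw a c b) (hch : crd a c < crd a (h c)) :
    ∃ u, sbtw a u b ∧ ∀ K ∈ L.mem, 0 < crd a K.a → crd a K.b < crd a b →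
      ¬ (crd a K.a < crd a u ∧ crd a u < crd a K.b) := by
  have hc0 := sbtw_base.1 hc
  have hsymm : ∀ x, h.symm x = x → x = a ∨ x = b := fun x e => hf x (by
    rw [← e, Equiv.apply_symm_apply, e])
  have ha' : h.symm a = a := by rw [Equiv.symm_apply_eq, ha]
  have ho' : ∀ x y z, sbtw (h.symm x) (h.symm y) (h.symm z) ↔ sbtw x y z := hh.symm.ord
  have hca : a ≠ h c := by rintro e; rw [← e, crd_self] at hch; linarith [hc0.1]
  let P : GoodInt := ⟨a, h c, hca⟩
  have hs := crd_self a
  -- a leaf covering both `c` and `h c` would be nested with its image, against `no_inv`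
  have step : ∀ K ∈ L.mem, 0 < crd a K.a → crd a K.b < crd a b →
      crd a K.a < crd a c → crd a c < crd a K.b → K.carrier ⊆ P.carrier := by
    intro K hK k1 k2 k3 k4
    refine sub_of_crd (P := P) (by change crd a K.a < crd a K.b; linarith) ?_
    change crd a K.b ≤ crd a (h c)
    by_contra hlt
    push Not at hlt
    have hKM : (⟨h K.a, h K.b, fun e => K.ne (h.injective e)⟩ : GoodInt) ∈ L.mem :=
      LamSys.mem_of_leaf ((hh.leaf _ _).2 (LamSys.leaf_of_mem hK))
    have m1 := (crd_lt_iff hh.ord ha K.a c).2 k3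
    have m2 := (crd_lt_iff hh.ord ha c K.b).2 k4
    have n := nl_of_mem hK hKM
    have hKa : K.a ≠ a := by intro e; rw [e, hs] at k1; linarith
    simp only [NL, mem_carrier, dual_a, dual_b, sbtw_iff a] at n
    by_cases q : crd a K.a ≤ crd a (h K.a)
    · refine no_inv hh.ord ha hf (u := K.a) (v := K.b) hKa (by linarith) k2 q ?_
      by_contra q'
      push Not at q'
      by_cases q2 : crd a K.a = crd a (h K.a)
      · rcases hf _ (crd_inj q2).symm with e | e
        · exact hKa e
        · rw [e] at k3; linarith [hc0.2]
      · have q := lt_of_le_of_ne q q2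
        grind
    · push Not at q
      refine no_inv ho' ha' hsymm (u := K.a) (v := K.b) hKa (by linarith) k2 ?_ ?_
      · rw [← crd_le_iff hh.ord ha, Equiv.apply_symm_apply]; exact q.le
      · rw [← crd_le_iff hh.ord ha, Equiv.apply_symm_apply]
        by_contra q'
        push Not at q'
        grind
  by_cases hex : ∃ K ∈ L.mem, 0 < crd a K.a ∧ crd a K.b < crd a b ∧
      crd a K.a < crd a c ∧ crd a c < crd a K.b
  · obtain ⟨K, hK, k1, k2, k3, k4⟩ := hex
    obtain ⟨M, hM, hKM, hMP, hmax⟩ := LamSys.exists_max hK (step K hK k1 k2 k3 k4)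
    have hle := le_of_sub hKM hMP
    have hMc := crd_of_sub hMP
    change crd a M.a ≤ crd a K.a ∧ crd a K.b ≤ crd a M.b at hle
    change crd a M.a < crd a M.b ∧ crd a M.b ≤ crd a (h c) at hMc
    have hhc : crd a (h c) < crd a b := by
      have := (crd_lt_iff hh.ord ha c b).2 hc0.2
      rwa [hb] at this
    have hMa : M.a ≠ a := by
      intro e
      have := LamSys.leaf_of_mem hM
      rw [e] at this
      rw [hl _ this] at hMc
      linarith
    have hMa0 := crd_pos hMa
    -- a leaf covering the endpoint `M.a` would contradict the maximality of `M`
    refine ⟨M.a, sbtw_base.2 ⟨hMa0, by linarith⟩, ?_⟩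
    rintro N hN n1 n2 ⟨n3, n4⟩
    have hn := nl_of_mem hM hN
    simp only [NL, mem_carrier, dual_a, dual_b, sbtw_iff a] at hn
    have n5 : crd a M.b ≤ crd a N.b := by
      by_contra hlt; push Not at hlt; grind
    have hNP := step N hN n1 n2 (by linarith) (by linarith)
    have := hmax N hN (sub_of_sub hMP hNP n3.le n5) hNP
    rw [this] at n3; linarith
  · push Not at hex
    refine ⟨c, hc, ?_⟩
    rintro K hK k1 k2 ⟨k3, k4⟩
    linarith [hex K hK k1 k2 k3]

/-- Some leaf separates the two fixed points. -/
theorem exists_sep_fixed {L : LamSys} (hL : L.QuiteFull) (hL' : L.Loose)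
    (hD : ∀ u v : S1, u ≠ v → ∃ c, sbtw u c v ∧ c ∉ L.E) {h : Equiv.Perm S1} (hh : Sym L h)
    {a b : S1} (hab : a ≠ b) (ha : h a = a) (hb : h b = b)
    (hf : ∀ x, h x = x → x = a ∨ x = b) :
    ∃ I ∈ L.mem, a ∈ I.carrier ∧ b ∈ I.dual.carrier := by
  have hla : ∀ v, L.Leaf a v → v = b := fun v => leaf_fixed hL' hD hh ha hf
  have hlb : ∀ v, L.Leaf b v → v = a := fun v =>
    leaf_fixed hL' hD hh hb (fun x hx => (hf x hx).symm)
  by_cases hl : L.Leaf a b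
  swap
  · refine LamSys.exists_sep hL hab ?_ ?_
    · rintro hE
      obtain ⟨I, hI, rfl⟩ := LamSys.mem_E.1 hE
      have := LamSys.leaf_of_mem hI
      rw [hla _ this] at this
      exact hl this
    · rintro hE
      obtain ⟨I, hI, rfl⟩ := LamSys.mem_E.1 hE
      have := LamSys.leaf_of_mem hI
      rw [hlb _ this] at this
      exact hl this.symm
  exfalso
  have hs := crd_self a
  have ha' : h.symm a = a := by rw [Equiv.symm_apply_eq, ha]
  have hb' : h.symm b = b := by rw [Equiv.symm_apply_eq, hb]
  have hf' : ∀ x, h.symm x = x → x = a ∨ x = b := fun x e => hf x (by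
    rw [← e, Equiv.apply_symm_apply, e])
  obtain ⟨u, hu, huK⟩ : ∃ u, sbtw a u b ∧ ∀ K ∈ L.mem, 0 < crd a K.a → crd a K.b < crd a b →
      ¬ (crd a K.a < crd a u ∧ crd a u < crd a K.b) := by
    obtain ⟨c, hc⟩ := exists_sbtw hab
    have hne : h c ≠ c := fun e => (hf c e).elim (sbtw_ne hc).1.symm (sbtw_ne hc).2.1
    rcases (crd_ne (q := a) hne).lt_or_gt with hlt | hlt
    · refine exists_uncovered hh.symm ha' hb' hf' hla hc ?_
      rw [← crd_lt_iff hh.ord ha, Equiv.apply_symm_apply]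
      exact hlt
    · exact exists_uncovered hh ha hb hf hla hc hlt
  have hu0 := sbtw_base.1 hu
  have hau := (sbtw_ne hu).1
  have hbu := (sbtw_ne hu).2.1
  let A : GoodInt := ⟨a, b, hab⟩
  have hA : A ∈ L.mem := LamSys.mem_of_leaf hl
  -- no leaf crosses the diagonal `(a, u)`
  have claim : ∀ J ∈ L.mem, ¬ (J.a ∈ (⟨a, u, hau⟩ : GoodInt).carrier ∧
      J.b ∈ (⟨a, u, hau⟩ : GoodInt).dual.carrier) := by
    rintro J hJ ⟨ja, jb⟩
    have m := (nl_of_mem hA hJ).1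
    simp only [A, mem_carrier, dual_a, dual_b, sbtw_iff a, hs] at ja jb m
    have j0 := crd_nonneg a J.b
    have j1 := crd_nonneg a J.a
    have hJb : J.b ≠ b := by
      intro e
      have := (LamSys.leaf_of_mem hJ).symm
      rw [e] at this
      rw [hlb _ this, hs] at ja
      grind
    have := crd_ne (q := a) hJb
    exact huK J hJ (by grind) (by grind) (by grind)
  have hG := LamSys.bigon_isGap (L := L) (P := ⟨a, u, hau⟩)
    (fun J hJ => ⟨claim J hJ, claim J.dual (L.dual_mem J hJ)⟩)
  have hu' : sbtw u b a := by rw [sbtw_iff a, hs]; grind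
  have hAG : A.dual ∈ L.gapOf {⟨a, u, hau⟩, (⟨a, u, hau⟩ : GoodInt).dual} := by
    refine ⟨_, Or.inr rfl, L.dual_mem A hA, ?_, ?_⟩
    · exact sub_of_crd (P := ⟨u, a, hau.symm⟩) (sbtw_base.1 hu').2 le_rfl
    · intro M hM h1 h2
      have e1 := (le_of_sub h1 h2).2
      have e2 := (crd_of_sub h2).2
      have hMb : M.b = a := crd_inj (q := u) (le_antisymm e2 e1)
      have hMa : M.a = b := hla _ (by
        have := (LamSys.leaf_of_mem hM).symm
        rwa [hMb] at this)
      exact GoodInt.ext' hMa hMb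
  -- the side following `(b, a)` in this gap starts at `a`, so it is `(a, b)`
  obtain ⟨J, hJG, hJa⟩ := hL.next hG hAG
  replace hJa : J.a = a := hJa
  obtain ⟨hJ, hJs⟩ := LamSys.bigon_sub hJG
  have hJb : J.b = b := hla _ (by
    have := LamSys.leaf_of_mem hJ
    rwa [hJa] at this)
  rcases hJs with hJs | hJs
  · have : crd a J.b ≤ crd a u := (crd_of_sub hJs).2
    rw [hJb] at this; linarith [hu0.2]
  · rcases sub_left hJs with e | e
    · exact hau (hJa.symm.trans e)
    · rw [hJa] at e; exact absurd rfl (sbtw_ne e).2.1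

/-! ### Dynamics of the separating leaf -/

theorem isOpen_carrier (I : GoodInt) : IsOpen I.carrier := by
  have h : I.carrier =
      (fun x : S1 => x + I.a) '' ((fun r : ℝ => (r : S1)) '' Set.Ioo 0 (crd I.a I.b)) := by
    ext z
    simp only [mem_carrier, sbtw_base, Set.mem_image, exists_exists_and_eq_and, Set.mem_Ioo]
    constructor
    · intro hz
      exact ⟨crd I.a z, hz, by rw [crd_coe]; abel⟩
    · rintro ⟨r, hr, rfl⟩
      rw [add_comm, crd_of _ hr.1.le (hr.2.trans (crd_lt_one _ _))]
      exact hr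
  rw [h]
  exact (Homeomorph.addRight I.a).isOpenMap _ (QuotientAddGroup.isOpenMap_coe _ isOpen_Ioo)

theorem closure_sub (I : GoodInt) : closure I.carrier ⊆ I.dual.carrierᶜ := by
  apply closure_minimal
  · intro z hz
    exact not_mem_dual hz
  · exact (isOpen_carrier _).isClosed_compl

/-- If `h` moves both endpoints of an interval inside it, and fixes a point on either side, then it
maps the closed interval into the interval. -/
theorem trap_mem {h : Equiv.Perm S1} (ho : ∀ x y z, sbtw (h x) (h y) (h z) ↔ sbtw x y z)
    {I : GoodInt} {a b : S1} (ha : h a = a) (hb : h b = b) (haI : a ∈ I.carrier)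
    (hbI : b ∈ I.dual.carrier) (h1 : h I.a ∈ I.carrier) (h2 : h I.b ∈ I.carrier) {z : S1} (hz : z ∉ I.dual.carrier) :
    h z ∈ I.carrier := by
  rcases mem_or I z with hz' | rfl | rfl | hz'
  · have hz'' := (ho _ _ _).2 hz'
    have haI' := (ho _ _ _).2 haI
    have hbI' := (ho _ _ _).2 hbI
    rw [ha] at haI'
    rw [hb] at hbI'
    clear hz hz' ho
    simp only [mem_carrier, dual_a, dual_b, sbtw_iff a, crd_self] at *
    have := crd_nonneg a I.a
    have := crd_nonneg a I.b
    have := crd_nonneg a (h I.a)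
    have := crd_nonneg a (h I.b)
    have := crd_nonneg a (h z)
    grind
  · exact h1
  · exact h2
  · exact absurd hz' hz

/-- The complement of a trapped interval is trapped by the inverse. -/
theorem trap_inv {h : Equiv.Perm S1} (ho : ∀ x y z, sbtw (h x) (h y) (h z) ↔ sbtw x y z)
    {I : GoodInt} {a b : S1} (ha : h a = a) (hb : h b = b) (haI : a ∈ I.carrier)
    (hbI : b ∈ I.dual.carrier) (h1 : h I.a ∈ I.carrier) (h2 : h I.b ∈ I.carrier) {z : S1} (hz : z ∉ I.carrier) :
    h.symm z ∈ I.dual.carrier := by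
  by_contra hc
  have := trap_mem ho ha hb haI hbI h1 h2 hc
  rw [Equiv.apply_symm_apply] at this
  exact hz this

theorem inter_fix {h : Equiv.Perm S1} {I : GoodInt} {a b : S1} (hfix : FixSet h = {a, b})
    (haI : a ∈ I.carrier) (hbI : b ∈ I.dual.carrier) : I.carrier ∩ FixSet h = {a} := by
  rw [hfix]
  ext x
  simp only [Set.mem_inter_iff, Set.mem_insert_iff, Set.mem_singleton_iff]
  constructor
  · rintro ⟨hx, rfl | rfl⟩
    · rfl
    · exact absurd hbI (not_mem_dual hx)
  · rintro rfl
    exact ⟨haI, Or.inl rfl⟩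

/-- A leaf around `a` which is mapped inside itself makes `a` attracting and `b` repelling. -/
theorem attr_rep {h : Equiv.Perm S1} (ho : ∀ x y z, sbtw (h x) (h y) (h z) ↔ sbtw x y z)
    {I : GoodInt} {a b : S1} (hfix : FixSet h = {a, b}) (ha : h a = a) (hb : h b = b)
    (haI : a ∈ I.carrier) (hbI : b ∈ I.dual.carrier)
    (h1 : h I.a ∈ I.carrier) (h2 : h I.b ∈ I.carrier) :
    IsAttractingFix h a ∧ IsRepellingFix h b := by
  refine ⟨⟨ha, I, inter_fix hfix haI hbI, ?_⟩, ⟨hb, I.dual, inter_fix ?_ hbI haI, ?_⟩⟩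
  · rintro _ ⟨z, hz, rfl⟩
    exact trap_mem ho ha hb haI hbI h1 h2 (closure_sub I hz)
  · rw [hfix, Set.pair_comm]
  · intro z hz
    exact ⟨h.symm z, subset_closure (trap_inv ho ha hb haI hbI h1 h2
      (fun h' => not_mem_dual h' hz)), h.apply_symm_apply z⟩

/-- The images of a trapped leaf around an attracting fixed point form a rainbow: if they all
contained a point `w` other than `a`, their endpoints on the side of `w` would converge to a third
fixed point. -/
theorem rainbow {L : LamSys} {h : Equiv.Perm S1} (hh : Sym L h) {I : GoodInt} (hI : I ∈ L.mem)
    {a b : S1} (ha : h a = a) (hb : h b = b) (hf : ∀ x, h x = x → x = a ∨ x = b)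
    (haI : a ∈ I.carrier) (hbI : b ∈ I.dual.carrier)
    (h1 : h I.a ∈ I.carrier) (h2 : h I.b ∈ I.carrier) : L.IsRainbowPt a := by
  have hinj : ∀ n : ℕ, Function.Injective h^[n] := fun n => h.injective.iterate n
  have hord : ∀ (n : ℕ) x y z, sbtw (h^[n] x) (h^[n] y) (h^[n] z) ↔ sbtw x y z := by
    intro n x y z
    induction n with
    | zero => rfl
    | succ n ih => simp only [Function.iterate_succ_apply', hh.ord, ih]
  let A : ℕ → GoodInt := fun n => ⟨h^[n] I.a, h^[n] I.b, fun e => I.ne (hinj n e)⟩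
  have hsurj : ∀ (n : ℕ) z, ∃ y, h^[n] y = z := fun n => h.surjective.iterate n
  have hA : ∀ n y, h^[n] y ∈ (A n).carrier ↔ y ∈ I.carrier := fun n y => hord n _ _ _
  have hA' : ∀ n y, h^[n] y ∈ (A (n + 1)).carrier ↔ ∃ z ∈ I.carrier, h z = y := by
    intro n y
    obtain ⟨z, rfl⟩ := h.surjective y
    rw [← Function.iterate_succ_apply, hA]
    constructor
    · exact fun hz => ⟨z, hz, rfl⟩
    · rintro ⟨w, hw, e⟩
      rwa [← h.injective e]
  have han : ∀ n : ℕ, h^[n] a = a := by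
    intro n
    induction n with
    | zero => rfl
    | succ n ih => rw [Function.iterate_succ_apply', ih, ha]
  refine ⟨A, ?_, ?_, ?_⟩
  · intro n
    apply LamSys.mem_of_leaf
    induction n with
    | zero => exact LamSys.leaf_of_mem hI
    | succ n ih =>
      simp only [A, Function.iterate_succ_apply'] at ih ⊢
      exact (hh.leaf _ _).2 ih
  · intro n
    refine (Set.ssubset_iff_of_subset ?_).2 ?_
    · intro z hz
      obtain ⟨y, rfl⟩ := hsurj n z
      obtain ⟨w, hw, rfl⟩ := (hA' n y).1 hz
      rw [hA]
      exact trap_mem hh.ord ha hb haI hbI h1 h2 (not_mem_dual hw)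
    · refine ⟨h^[n] (h I.a), (hA _ _).2 h1, fun hz => ?_⟩
      obtain ⟨w, hw, e⟩ := (hA' _ _).1 hz
      rw [h.injective e] at hw
      exact not_mem_left I hw
  · ext w
    rw [Set.mem_iInter, Set.mem_singleton_iff]
    constructor
    swap
    · rintro rfl n
      have := (hA n w).2 haI
      rwa [han] at this
    intro hw
    by_contra hwa
    have hwI : w ∈ I.carrier := hw 0
    have hIa0 : 0 < crd a I.a := crd_pos (by rintro e; rw [← e] at haI; exact not_mem_left I haI)
    have hIb0 : 0 < crd a I.b := crd_pos (by rintro e; rw [← e] at haI; exact not_mem_right I haI)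
    have hw0 := crd_pos hwa
    have hb0 : 0 < crd a b := crd_pos (by rintro rfl; exact not_mem_dual haI hbI)
    have hhIa0 : 0 ≤ crd a (h I.a) := crd_nonneg _ _
    have hhIb0 : 0 ≤ crd a (h I.b) := crd_nonneg _ _
    -- order of the images of the endpoints of the leaf, seen from `a`
    have haI' := (hh.ord _ _ _).2 haI
    have hbI' := (hh.ord _ _ _).2 hbI
    rw [ha] at haI'
    rw [hb] at hbI'
    simp only [mem_carrier, dual_a, dual_b, sbtw_iff a, crd_self] at haI hbI h1 h2 hwI haI' hbI'
    have h3 : crd a I.b < crd a b ∧ crd a b < crd a I.a := by grind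
    have h4 : crd a (h I.b) < crd a I.b ∧ crd a I.a < crd a (h I.a) := by grind
    have hwn : ∀ n : ℕ, crd a w < crd a (h^[n] I.b) ∨ crd a (h^[n] I.a) < crd a w := by
      intro n
      have e1 := hw n
      have e2 := (hord n _ _ _).2 (show sbtw I.a a I.b by rw [sbtw_iff a, crd_self]; exact haI)
      rw [han] at e2
      have : 0 ≤ crd a (h^[n] I.a) := crd_nonneg _ _
      have : 0 ≤ crd a (h^[n] I.b) := crd_nonneg _ _
      simp only [A, mem_carrier, sbtw_iff a, crd_self] at e1 e2
      grind
    have hma : ∀ n : ℕ, crd a (h^[n] I.a) < crd a (h^[n + 1] I.a) := by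
      intro n
      induction n with
      | zero => exact h4.2
      | succ n ih =>
        rw [Function.iterate_succ_apply', Function.iterate_succ_apply' h (n + 1)]
        exact (crd_lt_iff hh.ord ha _ _).2 ih
    have hmb : ∀ n : ℕ, crd a (h^[n + 1] I.b) < crd a (h^[n] I.b) := by
      intro n
      induction n with
      | zero => exact h4.1
      | succ n ih =>
        have := (crd_lt_iff hh.ord ha _ _).2 ih
        rwa [← Function.iterate_succ_apply' h, ← Function.iterate_succ_apply' h] at this
    have hma' : ∀ n : ℕ, crd a I.a ≤ crd a (h^[n] I.a) := fun n =>
      monotone_nat_of_le_succ (f := fun n => crd a (h^[n] I.a)) (fun n => (hma n).le) n.zero_le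
    have hmb' : ∀ n : ℕ, crd a (h^[n] I.b) ≤ crd a I.b := fun n =>
      antitone_nat_of_succ_le (f := fun n => crd a (h^[n] I.b)) (fun n => (hmb n).le) n.zero_le
    -- `w` stays below the decreasing right endpoints or above the increasing left endpoints
    by_cases hwb : crd a w < crd a b
    · have hwn' : ∀ n : ℕ, crd a w < crd a (h^[n] I.b) := fun n =>
        (hwn n).resolve_right (by have := hma' n; intro; linarith)
      obtain ⟨W, hW, hup, hWy⟩ := exists_sup hh.ord ha
        (X := {x | ∀ n : ℕ, crd a x ≤ crd a (h^[n] I.b)}) (y := I.b)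
        ⟨w, fun n => (hwn' n).le⟩
        (by
          intro x hx n
          refine le_trans ?_ (hmb n).le
          rw [Function.iterate_succ_apply', crd_le_iff hh.ord ha]
          exact hx n)
        (by
          intro x hx n
          rw [← crd_le_iff hh.ord ha, Equiv.apply_symm_apply, ← Function.iterate_succ_apply' h]
          exact hx (n + 1))
        (fun x hx => hx 0)
      have := hup w (fun n => (hwn' n).le)
      rcases hf W hW with rfl | rfl
      · rw [crd_self] at this; linarith
      · linarith [h3.1]
    · have hwn' : ∀ n : ℕ, crd a (h^[n] I.a) < crd a w := fun n =>
        (hwn n).resolve_left (by have := hmb' n; intro; linarith)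
      obtain ⟨W, hW, hup, hWy⟩ := exists_sup hh.ord ha
        (X := {x | ∃ n : ℕ, crd a x ≤ crd a (h^[n] I.a)}) (y := w) ⟨I.a, 0, le_rfl⟩
        (by
          rintro x ⟨n, hn⟩
          refine ⟨n + 1, ?_⟩
          rw [Function.iterate_succ_apply', crd_le_iff hh.ord ha]
          exact hn)
        (by
          rintro x ⟨n, hn⟩
          refine ⟨n, ?_⟩
          rw [← crd_le_iff hh.ord ha, Equiv.apply_symm_apply, ← Function.iterate_succ_apply' h]
          exact hn.trans (hma n).le)
        (by rintro x ⟨n, hn⟩; exact hn.trans (hwn' n).le)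
      have := hup I.a ⟨0, le_rfl⟩
      rcases hf W hW with rfl | rfl
      · rw [crd_self] at this; linarith
      · linarith [h3.2]

/-- A trapped leaf gives rainbows at both fixed points. -/
theorem rainbow_both {L : LamSys} {h : Equiv.Perm S1} (hh : Sym L h) {I : GoodInt}
    (hI : I ∈ L.mem) {a b : S1} (ha : h a = a) (hb : h b = b)
    (hf : ∀ x, h x = x → x = a ∨ x = b) (haI : a ∈ I.carrier) (hbI : b ∈ I.dual.carrier)
    (h1 : h I.a ∈ I.carrier) (h2 : h I.b ∈ I.carrier) :
    L.IsRainbowPt a ∧ L.IsRainbowPt b := by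
  refine ⟨rainbow hh hI ha hb hf haI hbI h1 h2, ?_⟩
  refine rainbow hh.symm (L.dual_mem I hI) (a := b) (b := a) ?_ ?_ ?_ hbI haI ?_ ?_
  · rw [Equiv.symm_apply_eq, hb]
  · rw [Equiv.symm_apply_eq, ha]
  · intro x hx
    refine (hf x ?_).symm
    rw [← hx, Equiv.apply_symm_apply, hx]
  · exact trap_inv hh.ord ha hb haI hbI h1 h2 (not_mem_right I)
  · exact trap_inv hh.ord ha hb haI hbI h1 h2 (not_mem_left I)

/-- A leaf separating the fixed points is trapped on one of its sides. -/
theorem trap_or {L : LamSys} {h : Equiv.Perm S1} (hh : Sym L h) {I : GoodInt} (hI : I ∈ L.mem)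
    {a b : S1} (ha : h a = a) (hb : h b = b) (hf : ∀ x, h x = x → x = a ∨ x = b)
    (haI : a ∈ I.carrier) (hbI : b ∈ I.dual.carrier) :
    (h I.a ∈ I.carrier ∧ h I.b ∈ I.carrier) ∨
    (h I.a ∈ I.dual.carrier ∧ h I.b ∈ I.dual.carrier) := by
  have n1 : h I.a ≠ I.a := by
    intro e
    rcases hf _ e with e | e
    · rw [← e] at haI; exact not_mem_left I haI
    · rw [← e] at hbI; exact not_mem_right I.dual hbI
  have n2 : h I.b ≠ I.b := by
    intro e
    rcases hf _ e with e | e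
    · rw [← e] at haI; exact not_mem_right I haI
    · rw [← e] at hbI; exact not_mem_left I.dual hbI
  have hM : (⟨h I.a, h I.b, fun e => I.ne (h.injective e)⟩ : GoodInt) ∈ L.mem :=
    LamSys.mem_of_leaf ((hh.leaf _ _).2 (LamSys.leaf_of_mem hI))
  have n := nl_of_mem hI hM
  have haI' := (hh.ord _ _ _).2 haI
  have hbI' := (hh.ord _ _ _).2 hbI
  rw [ha] at haI'
  rw [hb] at hbI'
  have c1 := crd_ne (q := a) n1
  have c2 := crd_ne (q := a) n2
  have := crd_nonneg a I.a
  have := crd_nonneg a I.b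
  have := crd_nonneg a (h I.a)
  have := crd_nonneg a (h I.b)
  simp only [NL, mem_carrier, dual_a, dual_b, sbtw_iff a, crd_self] at *
  grind

/-- The dynamics of an automorphism with two fixed points on one lamination system. -/
theorem dynamics {L : LamSys} (hL : L.QuiteFull) (hL' : L.Loose)
    (hD : ∀ u v : S1, u ≠ v → ∃ c, sbtw u c v ∧ c ∉ L.E) {g : Equiv.Perm S1} (hg : L.InAut g)
    {a b : S1} (hab : a ≠ b) (hfix : FixSet g = {a, b}) :
    ((IsAttractingFix g a ∧ IsRepellingFix g b) ∨
     (IsAttractingFix g b ∧ IsRepellingFix g a)) ∧ L.IsRainbowPt a ∧ L.IsRainbowPt b := by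
  have hh := hg.sym hL hL' hD
  have ha : g a = a := by
    have : a ∈ FixSet g := by rw [hfix]; simp
    exact this
  have hb : g b = b := by
    have : b ∈ FixSet g := by rw [hfix]; simp
    exact this
  have hf : ∀ x, g x = x → x = a ∨ x = b := fun x hx => by
    have : x ∈ FixSet g := hx
    rw [hfix] at this
    exact this
  obtain ⟨I, hI, haI, hbI⟩ := exists_sep_fixed hL hL' hD hh hab ha hb hf
  rcases trap_or hh hI ha hb hf haI hbI with ⟨h1, h2⟩ | ⟨h1, h2⟩
  · exact ⟨Or.inl (attr_rep hh.ord hfix ha hb haI hbI h1 h2),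
      rainbow_both hh hI ha hb hf haI hbI h1 h2⟩
  · have hf' : ∀ x, g x = x → x = b ∨ x = a := fun x hx => (hf x hx).symm
    exact ⟨Or.inr (attr_rep (I := I.dual) hh.ord (hfix.trans (Set.pair_comm a b)) hb ha hbI haI
        h2 h1),
      (rainbow_both hh (L.dual_mem I hI) hb ha hf' hbI haI h2 h1).symm⟩

/-- an automorphism of a pseudo-fibered pair with exactly two
fixed points is hyperbolic, and both fixed points are rainbow points of both
lamination systems. -/
theorem statement12 (L1 L2 : LamSys) (hpf : PseudoFibered L1 L2)
    (g : Equiv.Perm S1) (hg1 : L1.InAut g) (hg2 : L2.InAut g)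
    (a b : S1) (hab : a ≠ b) (hfix : FixSet g = {a, b}) :
    ((IsAttractingFix g a ∧ IsRepellingFix g b) ∨
     (IsAttractingFix g b ∧ IsRepellingFix g a)) ∧
    L1.IsRainbowPt a ∧ L2.IsRainbowPt a ∧ L1.IsRainbowPt b ∧ L2.IsRainbowPt b := by
  have hE : ∀ c, c ∈ L1.E → c ∈ L2.E → False := fun c h1 h2 => by
    have : c ∈ L1.E ∩ L2.E := ⟨h1, h2⟩
    rw [hpf.transverse] at this
    exact this
  have hD1 : ∀ u v : S1, u ≠ v → ∃ c, sbtw u c v ∧ c ∉ L1.E := fun u v h =>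
    let ⟨c, hc, hcE⟩ := LamSys.dense_E hpf.qf2 h
    ⟨c, hc, fun h1 => hE c h1 hcE⟩
  have hD2 : ∀ u v : S1, u ≠ v → ∃ c, sbtw u c v ∧ c ∉ L2.E := fun u v h =>
    let ⟨c, hc, hcE⟩ := LamSys.dense_E hpf.qf1 h
    ⟨c, hc, fun h1 => hE c hcE h1⟩
  obtain ⟨d, r1, r2⟩ := dynamics hpf.qf1 hpf.loose1 hD1 hg1 hab hfix
  obtain ⟨-, s1, s2⟩ := dynamics hpf.qf2 hpf.loose2 hD2 hg2 hab hfix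
  exact ⟨d, r1, s1, r2, s2⟩

end Veering
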